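/- arXiv:1301.1401 — 2 statements merged into one kernel-verified Lean document; each statement's English description precedes it below -/
import Mathlib

section
/- Let p be a prime and m, n ∈ ℕ. Then K_1(C_{p^m} ⊕ C_p^n) ≤ K_1(C_{p^m}) + K_1(C_p^{n+1}) − 1. -/
open Finset

/-- `S(I)` is minimal zero-sum: nonempty, zero-sum, and no proper nonempty
subfamily is zero-sum. -/
def IsMinZeroSum {G : Type*} [AddCommGroup G] {ℓ : ℕ} (g : Fin ℓ → G)
    (I : Finset (Fin ℓ)) : Prop :=
  I.Nonempty ∧ ∑ i ∈ I, g i = 0 ∧ ∀ J ⊂ I, J.Nonempty → ∑ i ∈ J, g i ≠ 0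

/-- `P` is an irreducible factorization of the indexed multiset `g`: a partition
of the index set all of whose parts are minimal zero-sum. -/
def IsFactorization {G : Type*} [AddCommGroup G] {ℓ : ℕ} (g : Fin ℓ → G)
    (P : Finpartition (Finset.univ : Finset (Fin ℓ))) : Prop :=
  ∀ I ∈ P.parts, IsMinZeroSum g I

/-- `g` is a unique factorization indexed multiset (UFIM) over `G∖{0}`:
all elements are nonzero and there is exactly one irreducible factorization. -/
def IsUFIM {G : Type*} [AddCommGroup G] {ℓ : ℕ} (g : Fin ℓ → G) : Prop :=
  (∀ i, g i ≠ 0) ∧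
  ∃! P : Finpartition (Finset.univ : Finset (Fin ℓ)), IsFactorization g P

/-- The cross number `k(S) = ∑ 1/ord(g_i)`. -/
noncomputable def crossNum {G : Type*} [AddCommGroup G] {ℓ : ℕ} (g : Fin ℓ → G) : ℝ :=
  ∑ i, (1 : ℝ) / (addOrderOf (g i) : ℝ)

/-- `K₁(G)`: the maximal cross number of a UFIM over `G∖{0}`. -/
noncomputable def K1 (G : Type*) [AddCommGroup G] : ℝ :=
  sSup {x : ℝ | ∃ (ℓ : ℕ) (g : Fin ℓ → G), IsUFIM g ∧ crossNum g = x}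

/-- `N₁(G)`: the maximal length of a UFIM over `G∖{0}`. -/
noncomputable def N1 (G : Type*) [AddCommGroup G] : ℕ :=
  sSup {n : ℕ | ∃ g : Fin n → G, IsUFIM g}

/-- `K(G)`: the maximal cross number of a minimal zero-sum indexed multiset over `G∖{0}`. -/
noncomputable def Kcross (G : Type*) [AddCommGroup G] : ℝ :=
  sSup {x : ℝ | ∃ (ℓ : ℕ) (g : Fin ℓ → G), (∀ i, g i ≠ 0) ∧
    IsMinZeroSum g Finset.univ ∧ crossNum g = x}

/-- `g` is zero-sum free: no nonempty subfamily is zero-sum. -/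
def IsZeroSumFree {G : Type*} [AddCommGroup G] {ℓ : ℕ} (g : Fin ℓ → G) : Prop :=
  ∀ I : Finset (Fin ℓ), I.Nonempty → ∑ i ∈ I, g i ≠ 0

/-- The little cross number `k(G)`: the maximal cross number of a zero-sum free
indexed multiset over `G∖{0}`. -/
noncomputable def littleCross (G : Type*) [AddCommGroup G] : ℝ :=
  sSup {x : ℝ | ∃ (ℓ : ℕ) (g : Fin ℓ → G), (∀ i, g i ≠ 0) ∧
    IsZeroSumFree g ∧ crossNum g = x}


namespace UFProof

set_option linter.unusedSectionVars false

variable {G : Type*} [AddCommGroup G] {ι : Type*} [DecidableEq ι]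

/-- Minimal zero-sum, for arbitrary index type. -/
def MZ (g : ι → G) (I : Finset ι) : Prop :=
  I.Nonempty ∧ ∑ i ∈ I, g i = 0 ∧ ∀ J ⊂ I, J.Nonempty → ∑ i ∈ J, g i ≠ 0

/-- Zero-sum families of nonzero elements whose zero-sum subfamilies are closed under
intersection. -/
structure UF (s : Finset ι) (g : ι → G) : Prop where
  ne : ∀ i ∈ s, g i ≠ 0
  sum : ∑ i ∈ s, g i = 0
  inter : ∀ A B : Finset ι, A ⊆ s → B ⊆ s → ∑ i ∈ A, g i = 0 → ∑ i ∈ B, g i = 0 →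
    ∑ i ∈ A ∩ B, g i = 0

lemma exists_MZ (g : ι → G) (s : Finset ι) (hs : s.Nonempty) (h0 : ∑ i ∈ s, g i = 0) :
    ∃ I ⊆ s, MZ g I := by
  induction s using Finset.strongInduction with
  | H s ih =>
    by_cases h : MZ g s
    · exact ⟨s, Finset.Subset.refl _, h⟩
    · simp only [MZ, not_and, not_forall] at h
      obtain ⟨J, hJ, hJn, hJ0⟩ := h hs h0
      obtain ⟨I, hI, hm⟩ := ih J hJ hJn (by simpa using hJ0)
      exact ⟨I, hI.trans hJ.subset, hm⟩

lemma sum_sdiff_zero (g : ι → G) {A s : Finset ι} (hA : A ⊆ s) (h : ∑ i ∈ s, g i = 0)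
    (hA0 : ∑ i ∈ A, g i = 0) : ∑ i ∈ s \ A, g i = 0 := by
  have := Finset.sum_sdiff (f := g) hA
  rw [h, hA0, add_zero] at this
  exact this

lemma UF.sdiff {s A : Finset ι} {g : ι → G} (h : UF s g) (hA : A ⊆ s)
    (hA0 : ∑ i ∈ A, g i = 0) : UF (s \ A) g where
  ne i hi := h.ne i (sdiff_subset hi)
  sum := sum_sdiff_zero g hA h.sum hA0
  inter C D hC hD := h.inter C D (hC.trans sdiff_subset) (hD.trans sdiff_subset)

lemma exists_fact (g : ι → G) (J : Finset ι) : ∀ (a b : Finset ι) (Q : Finpartition a),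
    (∀ I ∈ Q.parts, MZ g I) → Disjoint a J → ∑ i ∈ J, g i = 0 → a ∪ J = b →
    ∃ Q' : Finpartition b, (∀ I ∈ Q'.parts, MZ g I) ∧ Q.parts ⊆ Q'.parts := by
  induction J using Finset.strongInduction with
  | H J ih =>
    intro a b Q hQ hd h0 hab
    rcases J.eq_empty_or_nonempty with rfl | hne
    · rw [union_empty] at hab
      subst hab
      exact ⟨Q, hQ, Finset.Subset.refl _⟩
    · obtain ⟨I, hIJ, hI⟩ := exists_MZ g J hne h0
      have hdI : Disjoint a I := hd.mono_right hIJ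
      obtain ⟨Q', hQ', hs⟩ := ih (J \ I) (Finset.sdiff_ssubset hIJ hI.1) (a ∪ I) b
        (Q.extend (Finset.nonempty_iff_ne_empty.1 hI.1) hdI rfl)
        (by
          intro K hK
          simp only [Finpartition.extend_parts, mem_insert] at hK
          rcases hK with rfl | hK
          · exact hI
          · exact hQ K hK)
        (by
          rw [disjoint_union_left]
          exact ⟨hd.mono_right sdiff_subset, disjoint_sdiff⟩)
        (sum_sdiff_zero g hIJ h0 hI.2.1)
        (by rw [union_assoc, union_sdiff_of_subset hIJ, hab])
      refine ⟨Q', hQ', fun K hK => hs ?_⟩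
      simp [hK]

lemma UF_of_IsUFIM {ℓ : ℕ} {g : Fin ℓ → G} (h : IsUFIM g) : UF univ g := by
  obtain ⟨hne, P, hP, hu⟩ := h
  have hsum : ∑ i, g i = 0 := by
    rw [← P.biUnion_parts, Finset.sum_biUnion P.disjoint]
    exact Finset.sum_eq_zero fun I hI => (hP I hI).2.1
  have key : ∀ A : Finset (Fin ℓ), ∑ i ∈ A, g i = 0 →
      ∃ Q : Finpartition A, (∀ I ∈ Q.parts, MZ g I) ∧ Q.parts ⊆ P.parts := by
    intro A hA
    obtain ⟨Q, hQ, -⟩ := exists_fact g A ∅ A (Finpartition.empty _)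
      (by simp) (by simp) hA (by simp)
    obtain ⟨Q', hQ', hs⟩ := exists_fact g (univ \ A) A univ Q hQ disjoint_sdiff
      (sum_sdiff_zero g (subset_univ _) hsum hA) (by simp)
    have : Q' = P := hu Q' hQ'
    subst this
    exact ⟨Q, hQ, hs⟩
  refine ⟨fun i _ => hne i, hsum, fun A B _ _ hA hB => ?_⟩
  obtain ⟨Q, hQ, hQP⟩ := key A hA
  obtain ⟨R, hR, hRP⟩ := key B hB
  have : A ∩ B = (Q.parts ∩ R.parts).biUnion id := by
    ext i
    simp only [mem_inter, mem_biUnion, id]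
    constructor
    · rintro ⟨hiA, hiB⟩
      obtain ⟨t, ht, hit⟩ := Q.exists_mem hiA
      obtain ⟨u, hu', hiu⟩ := R.exists_mem hiB
      have := P.eq_of_mem_parts (hQP ht) (hRP hu') hit hiu
      subst this
      exact ⟨t, ⟨ht, hu'⟩, hit⟩
    · rintro ⟨t, ⟨h1, h2⟩, hi⟩
      exact ⟨Q.subset h1 hi, R.subset h2 hi⟩
  rw [this, Finset.sum_biUnion]
  · exact Finset.sum_eq_zero fun I hI => (hQ I (mem_inter.1 hI).1).2.1
  · exact Q.disjoint.subset (by intro x hx; exact (mem_inter.1 hx).1)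

lemma IsUFIM_of_UF {ℓ : ℕ} {g : Fin ℓ → G} (h : UF univ g) : IsUFIM g := by
  refine ⟨fun i => h.ne i (mem_univ i), ?_⟩
  obtain ⟨Q, hQ, -⟩ := exists_fact g univ ∅ univ (Finpartition.empty _)
      (by simp) (by simp) h.sum (by simp)
  have sub : ∀ P R : Finpartition (univ : Finset (Fin ℓ)), IsFactorization g P →
      IsFactorization g R → P.parts ⊆ R.parts := by
    intro P R hP hR I hI
    obtain ⟨⟨i, hi⟩, hI0, hIm⟩ := hP I hI
    obtain ⟨J, hJ, hiJ⟩ := R.exists_mem (mem_univ i)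
    obtain ⟨-, hJ0, hJm⟩ := hR J hJ
    have h0 := h.inter I J (subset_univ _) (subset_univ _) hI0 hJ0
    have hn : (I ∩ J).Nonempty := ⟨i, mem_inter.2 ⟨hi, hiJ⟩⟩
    have e1 : I ∩ J = I := by
      by_contra hc
      exact hIm _ (inter_subset_left.ssubset_of_ne hc) hn h0
    have e2 : I ∩ J = J := by
      by_contra hc
      exact hJm _ (inter_subset_right.ssubset_of_ne hc) hn h0
    rwa [← e1, e2]
  refine ⟨Q, hQ, fun R hR => ?_⟩
  exact Finpartition.ext ((sub R Q hR hQ).antisymm (sub Q R hQ hR))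

/-- Cross number on a finset. -/
noncomputable def kk (s : Finset ι) (g : ι → G) : ℝ :=
  ∑ i ∈ s, (1 : ℝ) / (addOrderOf (g i) : ℝ)

lemma exists_fin_of_UF {s : Finset ι} {g : ι → G} (h : UF s g) :
    ∃ g' : Fin s.card → G, IsUFIM g' ∧ crossNum g' = kk s g := by
  let e : Fin s.card ↪ ι := s.equivFin.symm.toEmbedding.trans (Function.Embedding.subtype _)
  have he : univ.map e = s := by
    ext x
    simp only [mem_map, mem_univ, true_and, e]
    constructor
    · rintro ⟨a, rfl⟩
      simp
    · intro hx
      exact ⟨s.equivFin ⟨x, hx⟩, by simp⟩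
  have hsum : ∀ A : Finset (Fin s.card), ∑ i ∈ A, g (e i) = ∑ i ∈ A.map e, g i := by
    intro A; rw [sum_map]
  have hsub : ∀ A : Finset (Fin s.card), A.map e ⊆ s := by
    intro A
    exact (map_subset_map.2 (subset_univ A)).trans he.subset
  refine ⟨fun i => g (e i), IsUFIM_of_UF ⟨?_, ?_, ?_⟩, ?_⟩
  · intro i _
    exact h.ne _ (hsub univ (mem_map_of_mem e (mem_univ i)))
  · rw [hsum, he, h.sum]
  · intro A B _ _ hA hB
    rw [hsum] at *
    rw [map_inter]
    exact h.inter _ _ (hsub _) (hsub _) hA hB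
  · unfold crossNum kk
    conv_rhs => rw [← he]
    rw [sum_map]

/-- Subset sums. -/
def SS (s : Finset ι) (g : ι → G) (x : G) : Prop := ∃ A ⊆ s, ∑ i ∈ A, g i = x

lemma chain (g : ι → G) (T : Finset ι) :
    (∀ A ⊆ T, A.Nonempty → ∑ i ∈ A, g i ≠ 0) →
    ∃ X : Finset G, X.card = T.card + 1 ∧ (∀ x ∈ X, SS T g x) ∧
      ∀ x ∈ X, ∀ y ∈ X, SS T g (x - y) ∨ SS T g (y - x) := by
  classical
  induction T using Finset.induction_on with
  | empty =>
    intro _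
    refine ⟨{0}, by simp, ?_, ?_⟩
    · intro x hx; exact ⟨∅, by simp, by simp at hx; simp [hx]⟩
    · intro x hx y hy
      simp at hx hy
      subst hx hy
      exact Or.inl ⟨∅, by simp⟩
  | insert e T he ih =>
    intro hfree
    obtain ⟨X, hc, hX, hd⟩ := ih fun A hA => hfree A (hA.trans (subset_insert _ _))
    have hmono : ∀ x, SS T g x → SS (insert e T) g x := by
      rintro x ⟨A, hA, rfl⟩
      exact ⟨A, hA.trans (subset_insert _ _), rfl⟩
    have hadd : ∀ x, SS T g x → ∃ A ⊆ insert e T, A.Nonempty ∧ ∑ i ∈ A, g i = g e + x := by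
      rintro x ⟨A, hA, rfl⟩
      refine ⟨insert e A, insert_subset_insert _ hA, insert_nonempty _ _, ?_⟩
      rw [sum_insert fun h => he (hA h)]
    have h0 : (0 : G) ∉ X.image (fun x => g e + x) := by
      simp only [mem_image, not_exists, not_and]
      intro x hx hz
      obtain ⟨A, hA, hn, hs⟩ := hadd x (hX x hx)
      exact hfree A hA hn (hs.trans hz)
    have hadd' : ∀ x ∈ X, SS (insert e T) g (g e + x) := by
      intro x hx
      obtain ⟨A, hA, hn, hs⟩ := hadd x (hX x hx)
      exact ⟨A, hA, hs⟩
    have hzero : SS (insert e T) g 0 := ⟨∅, by simp⟩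
    refine ⟨insert 0 (X.image (fun x => g e + x)), ?_, ?_, ?_⟩
    · rw [card_insert_of_notMem h0, card_image_of_injective _ (add_right_injective _), hc,
        card_insert_of_notMem he]
    · intro x hx
      simp only [mem_insert, mem_image] at hx
      rcases hx with rfl | ⟨x, hx, rfl⟩
      · exact hzero
      · exact hadd' x hx
    · intro x hx y hy
      simp only [mem_insert, mem_image] at hx hy
      rcases hx with rfl | ⟨x, hx, rfl⟩ <;> rcases hy with rfl | ⟨y, hy, rfl⟩
      · left; simpa using hzero
      · right; simpa using hadd' y hy
      · left; simpa using hadd' x hx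
      · rw [add_sub_add_left_eq_sub, add_sub_add_left_eq_sub]
        exact (hd x hx y hy).imp (hmono _) (hmono _)

lemma MZ_X {g : ι → G} {I : Finset ι} (h : MZ g I) :
    ∃ X : Finset G, X.card = I.card ∧ ∀ x ∈ X, ∀ y ∈ X, SS I g (x - y) := by
  obtain ⟨⟨e, he⟩, h0, hm⟩ := h
  obtain ⟨X, hc, -, hd⟩ := chain g (I.erase e) fun A hA hn =>
    hm A (lt_of_le_of_lt hA (erase_ssubset he)) hn
  refine ⟨X, by rw [hc, card_erase_add_one he], fun x hx y hy => ?_⟩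
  rcases hd x hx y hy with ⟨A, hA, hs⟩ | ⟨A, hA, hs⟩
  · exact ⟨A, hA.trans (erase_subset _ _), hs⟩
  · refine ⟨I \ A, sdiff_subset, ?_⟩
    have := Finset.sum_sdiff (f := g) (hA.trans (erase_subset e I))
    rw [h0, hs] at this
    rw [eq_neg_of_add_eq_zero_left this, neg_sub]

lemma UF_X {g : ι → G} (s : Finset ι) : UF s g → s.Nonempty → 
    ∃ X : Finset G, s.card ≤ X.card ∧ ∀ x ∈ X, ∀ y ∈ X, SS s g (x - y) := by
  classical
  induction s using Finset.strongInduction with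
  | H s ih =>
    intro h hne
    obtain ⟨I, hIs, hI⟩ := exists_MZ g s hne h.sum
    obtain ⟨X, hXc, hX⟩ := MZ_X hI
    rcases (s \ I).eq_empty_or_nonempty with hem | hne'
    · have : s = I := (sdiff_eq_empty_iff_subset.1 hem).antisymm hIs
      subst this
      exact ⟨X, hXc.ge, hX⟩
    · have hU := h.sdiff hIs hI.2.1
      obtain ⟨Y, hYc, hY⟩ := ih (s \ I) (sdiff_ssubset hIs hI.1) hU hne'
      have two : ∀ t : Finset ι, t ⊆ s → t.Nonempty → ∑ i ∈ t, g i = 0 → 2 ≤ t.card := by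
        intro t ht hn h0
        by_contra hc
        have h1 : t.card = 1 := by have := hn.card_pos; omega
        obtain ⟨a, rfl⟩ := card_eq_one.1 h1
        rw [sum_singleton] at h0
        exact h.ne a (ht (mem_singleton_self a)) h0
      have cI := two I hIs hI.1 hI.2.1
      have cJ := two (s \ I) sdiff_subset hne' hU.sum
      have cs := card_sdiff_add_card_eq_card hIs
      have hunion : ∀ u v, SS I g u → SS (s \ I) g v → ∃ A ⊆ s, ∃ B ⊆ I, A ∩ I = B ∧
          ∑ i ∈ A, g i = u + v ∧ ∑ i ∈ B, g i = u := by
        rintro u v ⟨A, hA, rfl⟩ ⟨B, hB, rfl⟩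
        have hdB : Disjoint B I := disjoint_of_subset_left hB sdiff_disjoint
        have hd : Disjoint A B := (hdB.mono_right hA).symm
        refine ⟨A ∪ B, union_subset (hA.trans hIs) (hB.trans sdiff_subset), A, hA, ?_,
          sum_union hd, rfl⟩
        rw [union_inter_distrib_right, inter_eq_left.2 hA, disjoint_iff_inter_eq_empty.1 hdB,
          union_empty]
      refine ⟨(X ×ˢ Y).image (fun z => z.1 + z.2), ?_, ?_⟩
      · rw [card_image_of_injOn, card_product, hXc]
        · nlinarith
        · rintro ⟨x, y⟩ hxy ⟨x', y'⟩ hxy' heq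
          simp only [coe_product, Set.mem_prod, mem_coe] at hxy hxy' heq
          obtain ⟨A, hA, B, hB, hAB, hs, hsB⟩ :=
            hunion _ _ (hX x hxy.1 x' hxy'.1) (hY y hxy.2 y' hxy'.2)
          have hA0 : ∑ i ∈ A, g i = 0 := by
            rw [hs, ← sub_eq_zero.2 heq]; abel
          have := h.inter A I hA hIs hA0 hI.2.1
          rw [hAB, hsB] at this
          have hx : x = x' := sub_eq_zero.1 this
          subst hx
          simpa using heq
      · intro z hz w hw
        simp only [mem_image, mem_product, Prod.exists] at hz hw
        obtain ⟨x, y, ⟨hx, hy⟩, rfl⟩ := hz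
        obtain ⟨x', y', ⟨hx', hy'⟩, rfl⟩ := hw
        obtain ⟨A, hA, -, -, -, hs, -⟩ := hunion _ _ (hX x hx x' hx') (hY y hy y' hy')
        exact ⟨A, hA, by rw [hs]; abel⟩

lemma UF.card_le [Finite G] {g : ι → G} {s : Finset ι} (h : UF s g) : s.card ≤ Nat.card G := by
  rcases s.eq_empty_or_nonempty with rfl | hne
  · simp
  · have := Fintype.ofFinite G
    obtain ⟨X, hX, -⟩ := UF_X s h hne
    rw [Nat.card_eq_fintype_card]
    exact hX.trans (card_le_univ X)

lemma kk_le_K1 [Finite G] {g : ι → G} {s : Finset ι} (h : UF s g) : kk s g ≤ K1 G := by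
  obtain ⟨g', h1, h2⟩ := exists_fin_of_UF h
  refine le_csSup ⟨Nat.card G, ?_⟩ ⟨_, g', h1, h2⟩
  rintro x ⟨ℓ, f, hf, rfl⟩
  have hc := (UF_of_IsUFIM hf).card_le
  simp only [card_univ, Fintype.card_fin] at hc
  calc crossNum f ≤ ∑ i : Fin ℓ, (1 : ℝ) := by
        refine Finset.sum_le_sum fun i _ => ?_
        rw [one_div]
        exact Nat.cast_inv_le_one _
    _ = ℓ := by simp
    _ ≤ Nat.card G := by exact_mod_cast hc

lemma MZ.UF {g : ι → G} {I : Finset ι} (h : MZ g I) (hne : ∀ i ∈ I, g i ≠ 0) : UF I g := by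
  obtain ⟨hn, h0, hm⟩ := h
  refine ⟨hne, h0, fun A B hA hB hA0 hB0 => ?_⟩
  rcases hA.eq_or_ssubset with rfl | hA'
  · rwa [inter_eq_right.2 hB]
  · rcases A.eq_empty_or_nonempty with rfl | hAn
    · simp
    · exact absurd hA0 (hm A hA' hAn)

end UFProof

namespace UFProof

variable {G : Type*} [AddCommGroup G] {ι : Type*} [DecidableEq ι]

lemma UF.merge {g : ι → G} {s B : Finset ι} (h : UF s g) (hB : B ⊆ s) {i0 : ι} (hi : i0 ∈ B)
    (hn : ∑ i ∈ B, g i ≠ 0) :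
    UF (insert i0 (s \ B)) (Function.update g i0 (∑ i ∈ B, g i)) := by
  set g' := Function.update g i0 (∑ i ∈ B, g i) with hg'
  let T : Finset ι → Finset ι := fun C => if i0 ∈ C then C ∪ B else C
  have hupd : ∀ C : Finset ι, i0 ∉ C → ∑ i ∈ C, g' i = ∑ i ∈ C, g i := by
    intro C hC
    refine sum_congr rfl fun i hiC => ?_
    rw [hg', Function.update_of_ne]
    rintro rfl
    exact hC hiC
  have hTs : ∀ C ⊆ insert i0 (s \ B), T C ⊆ s := by
    intro C hC x hx
    have := @hC x
    have := @hB x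
    have := hB hi
    simp only [T] at hx
    grind
  have hTsum : ∀ C ⊆ insert i0 (s \ B), ∑ i ∈ C, g' i = ∑ i ∈ T C, g i := by
    intro C hC
    by_cases hiC : i0 ∈ C
    · have e : T C = (C.erase i0) ∪ B := by
        ext x
        simp only [T, hiC, if_true, mem_union, mem_erase]
        by_cases hx : x = i0
        · subst hx; simp [hi]
        · simp [hx]
      have hd : Disjoint (C.erase i0) B := by
        rw [disjoint_left]
        intro x hx hxB
        have := hC (mem_of_mem_erase hx)
        have := ne_of_mem_erase hx
        grind
      rw [e, sum_union hd, ← sum_erase_add _ _ hiC, hupd _ (notMem_erase _ _), hg',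
        Function.update_self]
    · simp only [T, hiC, if_false]
      exact hupd C hiC
  have hTi : ∀ C ⊆ insert i0 (s \ B), ∀ D ⊆ insert i0 (s \ B), T C ∩ T D = T (C ∩ D) := by
    intro C hC D hD
    ext x
    have h1 := @hC x
    have h2 := @hD x
    simp only [mem_insert, mem_sdiff] at h1 h2
    simp only [T]
    by_cases c1 : i0 ∈ C <;> by_cases c2 : i0 ∈ D <;> simp [c1, c2] <;> grind
  refine ⟨?_, ?_, ?_⟩
  · intro i hi'
    by_cases hx : i = i0
    · subst hx; rw [hg', Function.update_self]; exact hn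
    · rw [hg', Function.update_of_ne hx]
      refine h.ne i ?_
      have := mem_of_mem_insert_of_ne hi' hx
      exact sdiff_subset this
  · rw [hTsum _ (Finset.Subset.refl _), ← h.sum]
    congr 1
    simp only [T, mem_insert_self, if_true]
    ext x
    have := @hB x
    have := hB hi
    grind
  · intro C D hC hD hC0 hD0
    rw [hTsum C hC] at hC0
    rw [hTsum D hD] at hD0
    rw [hTsum _ (inter_subset_left.trans hC), ← hTi C hC D hD]
    exact h.inter _ _ (hTs C hC) (hTs D hD) hC0 hD0

lemma exists_MZ2 {H : Type*} [AddCommGroup H] (q : ι → H) (g : ι → G) (B : Finset ι) :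
    ∑ i ∈ B, q i = 0 → ∑ i ∈ B, g i ≠ 0 → ∃ I ⊆ B, MZ q I ∧ ∑ i ∈ I, g i ≠ 0 := by
  induction B using Finset.strongInduction with
  | H B ih =>
    intro hq hg
    have hne : B.Nonempty := by
      rw [nonempty_iff_ne_empty]; rintro rfl; simp at hg
    by_cases h : MZ q B
    · exact ⟨B, Finset.Subset.refl _, h, hg⟩
    · simp only [MZ, not_and, not_forall] at h
      obtain ⟨J, hJ, hJn, hJ0⟩ := h hne hq
      simp only [ne_eq, not_not] at hJ0
      by_cases hJg : ∑ i ∈ J, g i = 0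
      · have h1 : ∑ i ∈ B \ J, g i ≠ 0 := by
          intro hc
          have := Finset.sum_sdiff (f := g) hJ.subset
          rw [hc, hJg, add_zero] at this
          exact hg this.symm
        obtain ⟨I, hI, hm⟩ := ih (B \ J) (sdiff_ssubset hJ.subset hJn)
          (sum_sdiff_zero q hJ.subset hq hJ0) h1
        exact ⟨I, hI.trans sdiff_subset, hm⟩
      · obtain ⟨I, hI, hm⟩ := ih J hJ hJ0 hJg
        exact ⟨I, hI.trans hJ.subset, hm⟩

lemma kk_union {g : ι → G} {s A : Finset ι} (hA : A ⊆ s) :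
    kk s g = kk (s \ A) g + kk A g := (Finset.sum_sdiff hA).symm

lemma step (p : ℕ) (hp : p.Prime) (j : ℕ) (c : G → ZMod p) (L : ZMod p →+ G)
    (hL : Function.Injective L) (hc : ∀ x : G, p ^ (j + 1) • x = 0 → L (c x) = p ^ j • x) (K : ℝ)
    (hK : ∀ (s : Finset ι) (g : ι → G), UF s g → (∀ i ∈ s, p ^ j • g i = 0) → kk s g ≤ K) :
    ∀ (N : ℕ) (s : Finset ι) (g : ι → G), s.card = N → UF s g →
      (∀ i ∈ s, p ^ (j + 1) • g i = 0) → kk s g ≤ K + 1 / (p : ℝ) ^ j := by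
  classical
  have := Fact.mk hp
  have hp0 : (0 : ℝ) < p := by exact_mod_cast hp.pos
  intro N
  induction N using Nat.strong_induction_on with
  | _ N ih =>
  intro s g hN h htor
  set A := s.filter (fun i => p ^ j • g i ≠ 0) with hAdef
  have hAs : A ⊆ s := filter_subset _ _
  let q : ι → ZMod p := fun i => c (g i)
  have hq : ∀ B ⊆ s, (∑ i ∈ B, q i = 0 ↔ p ^ j • ∑ i ∈ B, g i = 0) := by
    intro B hB
    rw [← map_eq_zero_iff L hL, map_sum, smul_sum]
    rw [sum_congr rfl fun i hi => hc (g i) (htor i (hB hi))]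
  have hqne : ∀ i ∈ A, q i ≠ 0 := by
    intro i hi hz
    have h1 := hc (g i) (htor i (hAs hi))
    change L (q i) = _ at h1
    rw [hz, map_zero] at h1
    exact (mem_filter.1 hi).2 h1.symm
  have hord : ∀ i ∈ A, addOrderOf (g i) = p ^ (j + 1) := fun i hi =>
    addOrderOf_eq_prime_pow (mem_filter.1 hi).2 (htor i (hAs hi))
  have hkA : ∀ B ⊆ A, B.card ≤ p → kk B g ≤ 1 / (p : ℝ) ^ j := by
    intro B hB hcard
    have : kk B g = B.card * (1 / (p : ℝ) ^ (j + 1)) := by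
      unfold kk
      rw [sum_congr rfl fun i hi => by rw [hord i (hB hi)]]
      simp
    rw [this]
    calc (B.card : ℝ) * (1 / (p : ℝ) ^ (j + 1)) ≤ p * (1 / (p : ℝ) ^ (j + 1)) := by
          gcongr
      _ = 1 / (p : ℝ) ^ j := by
          rw [pow_succ]; field_simp
  by_cases hex : ∃ B ⊆ A, ∑ i ∈ B, q i = 0 ∧ ∑ i ∈ B, g i ≠ 0
  · obtain ⟨B', hB', hB'q, hB'g⟩ := hex
    obtain ⟨I, hIB, hI, hIg⟩ := exists_MZ2 q g B' hB'q hB'g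
    have hIA : I ⊆ A := hIB.trans hB'
    have hIs : I ⊆ s := hIA.trans hAs
    have hIc : I.card ≤ p := by
      have := (hI.UF fun i hi => hqne i (hIA hi)).card_le
      simpa using this
    obtain ⟨i0, hi0⟩ := hI.1
    have hI2 : 2 ≤ I.card := by
      by_contra hcon
      have h1 : I.card = 1 := by have := hI.1.card_pos; omega
      obtain ⟨a, rfl⟩ := card_eq_one.1 h1
      have h0 := hI.2.1
      rw [sum_singleton] at h0
      exact hqne a (hIA (mem_singleton_self a)) h0
    have hm := h.merge hIs hi0 hIg
    have hIt : p ^ j • ∑ i ∈ I, g i = 0 := (hq I hIs).1 hI.2.1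
    have hnot : i0 ∉ s \ I := by simp [hi0]
    have hcard : (insert i0 (s \ I)).card < N := by
      rw [card_insert_of_notMem hnot, ← hN]
      have := card_sdiff_add_card_eq_card hIs
      omega
    have hle := ih _ hcard _ _ rfl hm (by
      intro i hi
      by_cases hx : i = i0
      · subst hx
        rw [Function.update_self, pow_succ', mul_smul, hIt, smul_zero]
      · rw [Function.update_of_ne hx]
        exact htor i (sdiff_subset (mem_of_mem_insert_of_ne hi hx)))
    refine le_trans ?_ hle
    have e : kk (insert i0 (s \ I)) (Function.update g i0 (∑ i ∈ I, g i))
        = 1 / (addOrderOf (∑ i ∈ I, g i) : ℝ) + kk (s \ I) g := by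
      unfold kk
      rw [sum_insert hnot, Function.update_self]
      congr 1
      refine sum_congr rfl fun i hi => ?_
      rw [Function.update_of_ne]
      rintro rfl
      exact hnot hi
    rw [e, kk_union hIs, add_comm]
    gcongr
    refine (hkA I hIA hIc).trans ?_
    have hdvd := addOrderOf_dvd_of_nsmul_eq_zero hIt
    have hpos : 0 < p ^ j := pow_pos hp.pos j
    have hle' := Nat.le_of_dvd hpos hdvd
    have hpos' := Nat.pos_of_dvd_of_pos hdvd hpos
    apply one_div_le_one_div_of_le
    · exact_mod_cast hpos'
    · exact_mod_cast hle'
  · push Not at hex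
    have hqA : ∑ i ∈ A, q i = 0 := by
      rw [hq A hAs, smul_sum, sum_filter_ne_zero, ← smul_sum, h.sum, smul_zero]
    have hgA := hex A (Finset.Subset.refl _) hqA
    have hUA : UF A q := by
      refine ⟨hqne, hqA, fun C D hC hD hC0 hD0 => ?_⟩
      rw [hq _ (inter_subset_left.trans (hC.trans hAs)),
        h.inter C D (hC.trans hAs) (hD.trans hAs) (hex C hC hC0) (hex D hD hD0), smul_zero]
    have hAc : A.card ≤ p := by simpa using hUA.card_le
    rw [kk_union hAs]
    refine add_le_add (hK _ _ (h.sdiff hAs hgA) ?_) (hkA A (Finset.Subset.refl _) hAc)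
    intro i hi
    rw [mem_sdiff, hAdef, mem_filter] at hi
    by_contra hc'
    exact hi.2 ⟨hi.1, hc'⟩

end UFProof

namespace UFProof

variable {G : Type*} [AddCommGroup G] {ι : Type*} [DecidableEq ι]

lemma exists_lam (p : ℕ) (hp : p.Prime) (m : ℕ) : ∃ f : ZMod p →+ ZMod (p ^ (m + 1)),
    Function.Injective f ∧ ∀ x, p • x = 0 → ∃ c, f c = x := by
  have hp0 : (p : ℤ) ≠ 0 := by exact_mod_cast hp.ne_zero
  let f0 : ℤ →+ ZMod (p ^ (m + 1)) :=
    (AddMonoidHom.mulRight ((p : ZMod (p ^ (m + 1))) ^ m)).comp (Int.castAddHom _)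
  have hf0 : ∀ k : ℤ, f0 k = ((k * (p : ℤ) ^ m : ℤ) : ZMod (p ^ (m + 1))) := by
    intro k; simp [f0]
  have hz : ∀ k : ℤ, (k : ZMod (p ^ (m + 1))) = 0 ↔ (p : ℤ) ^ (m + 1) ∣ k := by
    intro k
    rw [ZMod.intCast_zmod_eq_zero_iff_dvd]
    push_cast
    rfl
  have hfp : f0 p = 0 := by
    rw [hf0, hz, pow_succ']
  refine ⟨ZMod.lift p ⟨f0, hfp⟩, ?_, ?_⟩
  · rw [ZMod.lift_injective]
    intro k hk
    simp only at hk
    rw [hf0, hz, pow_succ'] at hk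
    rw [ZMod.intCast_zmod_eq_zero_iff_dvd]
    exact Int.dvd_of_mul_dvd_mul_right (pow_ne_zero m hp0) hk
  · intro x hx
    obtain ⟨z, rfl⟩ := ZMod.intCast_surjective x
    have h1 : ((p * z : ℤ) : ZMod (p ^ (m + 1))) = 0 := by
      rw [← hx]; simp
    rw [hz, pow_succ'] at h1
    obtain ⟨c, rfl⟩ := Int.dvd_of_mul_dvd_mul_left hp0 h1
    refine ⟨(c : ℤ), ?_⟩
    rw [ZMod.lift_coe]
    simp only
    rw [hf0, mul_comm]

lemma base (p : ℕ) (hp : p.Prime) (m n : ℕ) (s : Finset ι)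
    (g : ι → ZMod (p ^ (m + 1)) × (Fin n → ZMod p)) (h : UF s g)
    (ht : ∀ i ∈ s, p • g i = 0) : kk s g ≤ K1 (Fin (n + 1) → ZMod p) := by
  have := Fact.mk hp
  obtain ⟨f, hf, hsurj⟩ := exists_lam p hp m
  let φ : (Fin (n + 1) → ZMod p) →+ ZMod (p ^ (m + 1)) × (Fin n → ZMod p) :=
    { toFun := fun v => (f (v 0), fun i => v i.succ)
      map_zero' := by ext <;> simp
      map_add' := by intro a b; ext <;> simp }
  have hφ : Function.Injective φ := by
    intro a b hab
    have h1 : f (a 0) = f (b 0) := congrArg Prod.fst hab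
    have h2 : (fun i : Fin n => a i.succ) = fun i => b i.succ := congrArg Prod.snd hab
    funext i
    refine Fin.cases (hf h1) (fun i => congrFun h2 i) i
  have hex : ∀ i, ∃ v, i ∈ s → φ v = g i := by
    intro i
    by_cases hi : i ∈ s
    · obtain ⟨c, hc⟩ := hsurj (g i).1 (congrArg Prod.fst (ht i hi))
      refine ⟨Fin.cons c (g i).2, fun _ => ?_⟩
      refine Prod.ext ?_ ?_
      · simpa [φ] using hc
      · funext k; simp [φ]
    · exact ⟨0, fun h => absurd h hi⟩
  choose v hv using hex
  have hsum : ∀ A ⊆ s, (∑ i ∈ A, v i = 0 ↔ ∑ i ∈ A, g i = 0) := by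
    intro A hA
    rw [← map_eq_zero_iff φ hφ, map_sum, sum_congr rfl fun i hi => hv i (hA hi)]
  have hU : UF s v := by
    refine ⟨?_, (hsum s (Finset.Subset.refl _)).2 h.sum, ?_⟩
    · intro i hi hz
      apply h.ne i hi
      rw [← hv i hi, hz, map_zero]
    · intro A B hA hB hA0 hB0
      rw [hsum _ (inter_subset_left.trans hA)]
      exact h.inter A B hA hB ((hsum A hA).1 hA0) ((hsum B hB).1 hB0)
  have : kk s g = kk s v := by
    refine sum_congr rfl fun i hi => ?_
    rw [← hv i hi, addOrderOf_injective φ hφ]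
  rw [this]
  exact kk_le_K1 hU

lemma upper (p : ℕ) (hp : p.Prime) (m n : ℕ) (j : ℕ) : ∀ (s : Finset ι)
    (g : ι → ZMod (p ^ (m + 1)) × (Fin n → ZMod p)), UF s g →
    (∀ i ∈ s, p ^ (j + 1) • g i = 0) →
    kk s g ≤ K1 (Fin (n + 1) → ZMod p) + ∑ i ∈ range j, 1 / (p : ℝ) ^ (i + 1) := by
  induction j with
  | zero =>
    intro s g h ht
    simpa using base p hp m n s g h (by simpa using ht)
  | succ j ih =>
    intro s g h ht
    obtain ⟨f, hf, hsurj⟩ := exists_lam p hp m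
    have hex : ∀ x : ZMod (p ^ (m + 1)) × (Fin n → ZMod p), ∃ c : ZMod p,
        p ^ (j + 1 + 1) • x = 0 → f c = p ^ (j + 1) • x.1 := by
      intro x
      by_cases hx : p ^ (j + 1 + 1) • x = 0
      · obtain ⟨c, hc⟩ := hsurj (p ^ (j + 1) • x.1) (by
          rw [← mul_smul, ← pow_succ']
          exact congrArg Prod.fst hx)
        exact ⟨c, fun _ => hc⟩
      · exact ⟨0, fun h => absurd h hx⟩
    choose c hc using hex
    rw [sum_range_succ, ← add_assoc]
    refine step p hp (j + 1) c ((AddMonoidHom.inl _ _).comp f) ?_ ?_ _ ih s.card s g rfl h ht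
    · intro a b hab
      exact hf (congrArg Prod.fst hab)
    · intro x hx
      refine Prod.ext (hc x hx) ?_
      funext k
      simp [pow_succ]

lemma UF.union {g : ι → G} {s t : Finset ι} (h : UF s g) (hd : Disjoint s t)
    (hne : ∀ i ∈ t, g i ≠ 0) (ht : ∑ i ∈ t, g i = 0)
    (hA : ∀ A ⊆ s ∪ t, ∑ i ∈ A, g i = 0 → A ∩ t = ∅ ∨ A ∩ t = t) : UF (s ∪ t) g := by
  have split : ∀ A ⊆ s ∪ t, ∑ i ∈ A, g i = ∑ i ∈ A ∩ s, g i + ∑ i ∈ A ∩ t, g i := by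
    intro A hA'
    rw [← sum_union (hd.mono inter_subset_right inter_subset_right), ← inter_union_distrib_left,
      inter_eq_left.2 hA']
  have h0 : ∀ A ⊆ s ∪ t, ∑ i ∈ A, g i = 0 → ∑ i ∈ A ∩ s, g i = 0 := by
    intro A hA' hz
    have e := split A hA'
    rw [hz] at e
    rcases hA A hA' hz with h1 | h1 <;> rw [h1] at e
    · simpa using e.symm
    · rw [ht] at e; simpa using e.symm
  refine ⟨?_, ?_, ?_⟩
  · intro i hi
    rcases mem_union.1 hi with hi | hi
    · exact h.ne i hi
    · exact hne i hi
  · rw [sum_union hd, h.sum, ht, add_zero]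
  · intro A B hA' hB' hA0 hB0
    rw [split _ (inter_subset_left.trans hA')]
    have e1 : A ∩ B ∩ s = (A ∩ s) ∩ (B ∩ s) := by ext x; simp only [mem_inter]; tauto
    have e2 : A ∩ B ∩ t = (A ∩ t) ∩ (B ∩ t) := by ext x; simp only [mem_inter]; tauto
    rw [e1, e2, h.inter _ _ inter_subset_right inter_subset_right (h0 A hA' hA0) (h0 B hB' hB0)]
    rcases hA A hA' hA0 with h1 | h1 <;> rcases hA B hB' hB0 with h2 | h2 <;> simp [h1, h2, ht]

/-- The extremal example in the cyclic group of order `p ^ (m + 1)`. -/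
def ex (p m : ℕ) (x : ℕ × ℕ) : ZMod (p ^ (m + 1)) :=
  (p : ZMod (p ^ (m + 1))) ^ (m - x.1) * (if x.2 = 0 then 1 - (p : ZMod (p ^ (m + 1))) else 1)

lemma ex_UF (p : ℕ) (hp : p.Prime) (m : ℕ) (D : ℕ) : D ≤ m + 1 →
    UF (range D ×ˢ range p) (ex p m) ∧
    kk (range D ×ˢ range p) (ex p m) = ∑ i ∈ range D, 1 / (p : ℝ) ^ i := by
  have := Fact.mk hp
  have hpR : (p : ℝ) ≠ 0 := by exact_mod_cast hp.ne_zero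
  have hpow : (p : ZMod (p ^ (m + 1))) ^ (m + 1) = 0 := by
    have := ZMod.natCast_self (p ^ (m + 1))
    push_cast at this
    exact this
  have hdiv : ∀ k : ℕ, (k : ZMod (p ^ (m + 1))) * (p : ZMod (p ^ (m + 1))) ^ m = 0 → p ∣ k := by
    intro k hk
    have : ((k * p ^ m : ℕ) : ZMod (p ^ (m + 1))) = 0 := by push_cast; exact hk
    rw [ZMod.natCast_eq_zero_iff, pow_succ'] at this
    exact Nat.dvd_of_mul_dvd_mul_right (pow_pos hp.pos m) this
  have hpm : (p : ZMod (p ^ (m + 1))) ^ m ≠ 0 := by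
    intro hz
    have := hdiv 1 (by rw [hz, mul_zero])
    exact hp.one_lt.ne' (Nat.dvd_one.1 this)
  have hlow : ∀ d D t, d < D → D ≤ m →
      (p : ZMod (p ^ (m + 1))) ^ D * ex p m (d, t) = 0 := by
    intro d D t hd hD
    have e : D + (m - d) = (m + 1) + (D - d - 1) := by omega
    simp only [ex]
    rw [← mul_assoc, ← pow_add, e, pow_add (p : ZMod (p ^ (m + 1))) (m + 1), hpow, zero_mul, zero_mul]
  have htop : ∀ D t, D ≤ m →
      (p : ZMod (p ^ (m + 1))) ^ D * ex p m (D, t) = (p : ZMod (p ^ (m + 1))) ^ m := by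
    intro D t hD
    have e : D + (m - D) = m := by omega
    simp only [ex]
    rw [← mul_assoc, ← pow_add, e]
    split_ifs
    · rw [mul_sub, ← pow_succ, hpow]; ring
    · ring
  induction D with
  | zero =>
    intro _
    refine ⟨⟨by simp, by simp, ?_⟩, by simp [kk]⟩
    intro A B hA hB _ _
    have : A = ∅ := by simpa using hA
    simp [this]
  | succ D ih =>
    intro hD
    have hDm : D ≤ m := by omega
    obtain ⟨hU, hk⟩ := ih (by omega)
    set t : Finset (ℕ × ℕ) := ({D} : Finset ℕ) ×ˢ range p with htdef
    have hst : range (D + 1) ×ˢ range p = range D ×ˢ range p ∪ t := by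
      rw [htdef, ← union_product, range_add_one, union_comm, insert_eq]
    have hd : Disjoint (range D ×ˢ range p) t := by
      rw [disjoint_left]
      rintro ⟨a, b⟩ h1 h2
      simp only [htdef, mem_product, mem_range, mem_singleton] at h1 h2
      omega
    have htc : t.card = p := by simp [htdef]
    have htmem : ∀ x ∈ t, (p : ZMod (p ^ (m + 1))) ^ D * ex p m x =
        (p : ZMod (p ^ (m + 1))) ^ m := by
      rintro ⟨a, b⟩ hx
      simp only [htdef, mem_product, mem_singleton] at hx
      obtain rfl := hx.1
      exact htop a b hDm
    have hord : ∀ x ∈ t, addOrderOf (ex p m x) = p ^ (D + 1) := by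
      intro x hx
      apply addOrderOf_eq_prime_pow
      · rw [nsmul_eq_mul]
        push_cast
        rw [htmem x hx]
        exact hpm
      · rw [nsmul_eq_mul]
        push_cast
        rw [pow_succ' (p : ZMod (p ^ (m + 1))) D, mul_assoc, htmem x hx, ← pow_succ', hpow]
    have htsum : ∑ x ∈ t, ex p m x = 0 := by
      rw [htdef, sum_product, sum_singleton]
      simp only [ex]
      rw [← mul_sum]
      have : ∑ i ∈ range p, (if i = 0 then 1 - (p : ZMod (p ^ (m + 1))) else 1) = 0 := by
        obtain ⟨r, hr⟩ : ∃ r, p = r + 1 := ⟨p - 1, by have := hp.pos; omega⟩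
        have hrange : range p = range (r + 1) := by rw [← hr]
        have hcast : (p : ZMod (p ^ (m + 1))) = r + 1 := by
          have := congrArg (Nat.cast : ℕ → ZMod (p ^ (m + 1))) hr
          push_cast at this
          exact this
        rw [hrange, sum_range_succ']
        simp [hcast]
      rw [this, mul_zero]
    rw [hst]
    refine ⟨hU.union hd ?_ htsum ?_, ?_⟩
    · intro x hx hz
      have := htmem x hx
      rw [hz, mul_zero] at this
      exact hpm this.symm
    · intro A hA hA0
      have h1 : (((A ∩ t).card : ℕ) : ZMod (p ^ (m + 1))) * (p : ZMod (p ^ (m + 1))) ^ m = 0 := by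
        have e : ∑ x ∈ A, (p : ZMod (p ^ (m + 1))) ^ D * ex p m x = 0 := by
          rw [← mul_sum, hA0, mul_zero]
        rw [← sum_subset (inter_subset_left : A ∩ t ⊆ A)] at e
        · rw [sum_congr rfl fun x hx => htmem x (mem_inter.1 hx).2, sum_const, nsmul_eq_mul] at e
          exact e
        · rintro ⟨a, b⟩ hx hnx
          have hxs : (a, b) ∈ range D ×ˢ range p := by
            rcases mem_union.1 (hA hx) with h | h
            · exact h
            · exact absurd (mem_inter.2 ⟨hx, h⟩) hnx
          simp only [mem_product, mem_range] at hxs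
          exact hlow a D b hxs.1 hDm
      have h2 := hdiv _ h1
      rcases Nat.eq_zero_or_pos (A ∩ t).card with h3 | h3
      · left; exact card_eq_zero.1 h3
      · right
        refine eq_of_subset_of_card_le inter_subset_right ?_
        rw [htc]
        exact Nat.le_of_dvd h3 h2
    · have e : kk (range D ×ˢ range p ∪ t) (ex p m) =
          kk (range D ×ˢ range p) (ex p m) + kk t (ex p m) := sum_union hd
      rw [e, hk, sum_range_succ]
      congr 1
      unfold kk
      rw [sum_congr rfl fun x hx => by rw [hord x hx], sum_const, htc, nsmul_eq_mul]
      push_cast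
      rw [pow_succ]
      field_simp

theorem main (p : ℕ) (hp : p.Prime) (m n : ℕ) :
    K1 (ZMod (p ^ (m + 1)) × (Fin n → ZMod p)) ≤
      K1 (ZMod (p ^ (m + 1))) + K1 (Fin (n + 1) → ZMod p) - 1 := by
  have := Fact.mk hp
  have : NeZero (p ^ (m + 1)) := ⟨(pow_pos hp.pos _).ne'⟩
  have hlow : ∑ i ∈ range (m + 1), 1 / (p : ℝ) ^ i ≤ K1 (ZMod (p ^ (m + 1))) := by
    obtain ⟨h1, h2⟩ := ex_UF p hp m (m + 1) le_rfl
    rw [← h2]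
    exact kk_le_K1 h1
  rw [sum_range_succ'] at hlow
  simp only [pow_zero, div_one] at hlow
  refine csSup_le ?_ ?_
  · refine ⟨_, 0, fun _ => 0, IsUFIM_of_UF ⟨by simp, by simp, by simp⟩, rfl⟩
  · rintro x ⟨ℓ, g, hg, rfl⟩
    have h := upper p hp m n m univ g (UF_of_IsUFIM hg) (by
      intro i _
      refine Prod.ext ?_ ?_
      · rw [Prod.smul_fst, nsmul_eq_mul, Prod.fst_zero]
        rw [ZMod.natCast_self, zero_mul]
      · funext k
        simp [pow_succ])
    change crossNum g ≤ _ at h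
    linarith

end UFProof

/-- Theorem (mainthm (1)): `K₁(C_{p^m} ⊕ C_p^n) ≤ K₁(C_{p^m}) + K₁(C_p^{n+1}) − 1`. -/
theorem K1_pm_pn_le (p : ℕ) (hp : p.Prime) (m n : ℕ) (hm : 1 ≤ m) (hn : 1 ≤ n) :
    K1 (ZMod (p ^ m) × (Fin n → ZMod p)) ≤
      K1 (ZMod (p ^ m)) + K1 (Fin (n + 1) → ZMod p) - 1 := by
  obtain ⟨m, rfl⟩ : ∃ k, m = k + 1 := ⟨m - 1, by omega⟩
  exact UFProof.main p hp m n
end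

section
/- Let p and q be distinct primes and m, n ∈ ℕ. Then K_1(C_{p^m} ⊕ C_q^n) ≤ K_1(C_{p^m}) + K_1(C_q^n). -/
open Finset

/-- Minimal zero-sum, for arbitrary index types. -/
def MZ {ι G : Type*} [AddCommGroup G] (f : ι → G) (I : Finset ι) : Prop :=
  I.Nonempty ∧ ∑ i ∈ I, f i = 0 ∧ ∀ J ⊂ I, J.Nonempty → ∑ i ∈ J, f i ≠ 0

/-- Nonzero elements, and zero-sum subfamilies are closed under intersection. -/
def PPon {ι G : Type*} [AddCommGroup G] [DecidableEq ι] (s : Finset ι) (f : ι → G) : Prop :=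
  (∀ i ∈ s, f i ≠ 0) ∧ ∀ I ⊆ s, ∀ J ⊆ s, ∑ i ∈ I, f i = 0 → ∑ i ∈ J, f i = 0 →
    ∑ i ∈ I ∩ J, f i = 0

lemma MZ.eq_of_subset {ι G : Type*} [AddCommGroup G] {f : ι → G} {I J : Finset ι}
    (h : MZ f I) (hJ : J ⊆ I) (hne : J.Nonempty) (h0 : ∑ i ∈ J, f i = 0) : J = I := by
  by_contra hcon
  exact h.2.2 J (Finset.ssubset_iff_subset_ne.2 ⟨hJ, hcon⟩) hne h0

lemma exists_MZ {ι G : Type*} [AddCommGroup G] (f : ι → G) (I : Finset ι) :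
    I.Nonempty → ∑ i ∈ I, f i = 0 → ∃ T ⊆ I, MZ f T := by
  induction I using Finset.strongInduction with
  | H I ih =>
    intro hne h0
    by_cases h : ∃ J ⊂ I, J.Nonempty ∧ ∑ i ∈ J, f i = 0
    · obtain ⟨J, hJ, hJne, hJ0⟩ := h
      obtain ⟨T, hT, hT'⟩ := ih J hJ hJne hJ0
      exact ⟨T, hT.trans hJ.1, hT'⟩
    · push Not at h
      exact ⟨I, subset_rfl, hne, h0, h⟩

lemma exists_fact {ι G : Type*} [AddCommGroup G] [DecidableEq ι] (f : ι → G) (I : Finset ι) :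
    ∑ i ∈ I, f i = 0 → ∃ P : Finpartition I, ∀ T ∈ P.parts, MZ f T := by
  induction I using Finset.strongInduction with
  | H I ih =>
    intro h0
    rcases I.eq_empty_or_nonempty with rfl | hne
    · exact ⟨Finpartition.empty _, by simp [Finpartition.empty]⟩
    · obtain ⟨T, hT, hmz⟩ := exists_MZ f I hne h0
      have hlt : I \ T ⊂ I := Finset.sdiff_ssubset hT hmz.1
      have h0' : ∑ i ∈ I \ T, f i = 0 := by
        have := Finset.sum_sdiff (f := f) hT
        rw [hmz.2.1, h0, add_zero] at this
        exact this
      obtain ⟨P, hP⟩ := ih _ hlt h0'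
      refine ⟨P.extend (b := T) hmz.1.ne_empty Finset.sdiff_disjoint
        (Finset.sdiff_union_of_subset hT), ?_⟩
      intro U hU
      simp only [Finpartition.extend, Finset.mem_insert] at hU
      rcases hU with rfl | hU
      · exact hmz
      · exact hP U hU

lemma sum_partition {ι G : Type*} [AddCommMonoid G] [DecidableEq ι] {I : Finset ι}
    (P : Finpartition I) (f : ι → G) : ∑ T ∈ P.parts, ∑ i ∈ T, f i = ∑ i ∈ I, f i := by
  have h := Finset.sum_biUnion (f := f) (t := id) P.supIndep.pairwiseDisjoint
  rw [P.biUnion_parts] at h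
  simpa using h.symm

lemma ufim_pp {G : Type*} [AddCommGroup G] {ℓ : ℕ} {g : Fin ℓ → G} (h : IsUFIM g) :
    PPon Finset.univ g := by
  obtain ⟨hnz, P, hP, huniq⟩ := h
  have htot : ∑ i, g i = 0 := by
    rw [← sum_partition P g]
    exact Finset.sum_eq_zero fun T hT => (hP T hT).2.1
  -- every zero-sum set is compatible with parts
  have key : ∀ I : Finset (Fin ℓ), ∑ i ∈ I, g i = 0 → ∀ T ∈ P.parts, T ⊆ I ∨ Disjoint T I := by
    intro I hI T hT
    obtain ⟨P1, h1⟩ := exists_fact g I hI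
    have hIc : ∑ i ∈ Finset.univ \ I, g i = 0 := by
      have := Finset.sum_sdiff (f := g) (Finset.subset_univ I)
      rw [hI, htot, add_zero] at this
      exact this
    obtain ⟨P2, h2⟩ := exists_fact g _ hIc
    let Q : Finpartition (Finset.univ : Finset (Fin ℓ)) :=
      { parts := P1.parts ∪ P2.parts
        supIndep := by
          rw [Finset.supIndep_iff_pairwiseDisjoint]
          intro a ha b hb hab
          simp only [Finset.coe_union, Set.mem_union, Finset.mem_coe] at ha hb
          have hd : Disjoint I (Finset.univ \ I) := Finset.disjoint_sdiff
          rcases ha with ha | ha <;> rcases hb with hb | hb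
          · exact P1.disjoint ha hb hab
          · exact Disjoint.mono (P1.le ha) (P2.le hb) hd
          · exact Disjoint.mono (P2.le ha) (P1.le hb) hd.symm
          · exact P2.disjoint ha hb hab
        sup_parts := by
          rw [Finset.sup_union, P1.sup_parts, P2.sup_parts]
          exact Finset.union_sdiff_of_subset (Finset.subset_univ I)
        bot_notMem := by
          simp only [Finset.mem_union, not_or]
          exact ⟨P1.bot_notMem, P2.bot_notMem⟩ }
    have hQ : IsFactorization g Q := by
      intro U hU
      rcases Finset.mem_union.1 hU with hU | hU
      · exact h1 U hU
      · exact h2 U hU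
    have hQP : Q = P := huniq Q hQ
    rw [← hQP] at hT
    rcases Finset.mem_union.1 hT with hU | hU
    · left; exact P1.le hU
    · right; exact Disjoint.mono_left (P2.le hU) Finset.sdiff_disjoint
  refine ⟨fun i _ => hnz i, ?_⟩
  intro I _ J _ hI hJ
  have hcalc : ∀ W : Finset (Fin ℓ), ∑ i ∈ W, g i = ∑ T ∈ P.parts, ∑ i ∈ T, if i ∈ W then g i else 0 := by
    intro W
    rw [sum_partition P, Finset.sum_ite_mem, Finset.univ_inter]
  rw [hcalc]
  apply Finset.sum_eq_zero
  intro T hT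
  rw [Finset.sum_ite_mem]
  rcases key I hI T hT with h1 | h1
  · rcases key J hJ T hT with h2 | h2
    · rw [Finset.inter_eq_left.2 (Finset.subset_inter h1 h2)]
      exact (hP T hT).2.1
    · rw [Finset.disjoint_iff_inter_eq_empty.1 (h2.mono_right Finset.inter_subset_right)]
      simp
  · rw [Finset.disjoint_iff_inter_eq_empty.1 (h1.mono_right Finset.inter_subset_left)]
    simp

lemma pp_ufim {G : Type*} [AddCommGroup G] {ℓ : ℕ} {g : Fin ℓ → G}
    (h : PPon Finset.univ g) (h0 : ∑ i, g i = 0) : IsUFIM g := by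
  refine ⟨fun i => h.1 i (Finset.mem_univ i), ?_⟩
  obtain ⟨P, hP⟩ := exists_fact g Finset.univ h0
  have aux : ∀ P Q : Finpartition (Finset.univ : Finset (Fin ℓ)), IsFactorization g P →
      IsFactorization g Q → P.parts ⊆ Q.parts := by
    intro P Q hP hQ I hI
    obtain ⟨x, hx⟩ := (hP I hI).1
    obtain ⟨J, hJ, hxJ⟩ := Q.exists_mem (Finset.mem_univ x)
    have hz := h.2 I (Finset.subset_univ _) J (Finset.subset_univ _) (hP I hI).2.1 (hQ J hJ).2.1
    have hne : (I ∩ J).Nonempty := ⟨x, Finset.mem_inter.2 ⟨hx, hxJ⟩⟩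
    have e1 := MZ.eq_of_subset (hP I hI) Finset.inter_subset_left hne hz
    have e2 := MZ.eq_of_subset (hQ J hJ) Finset.inter_subset_right hne hz
    rw [← e1, e2]
    exact hJ
  refine ⟨P, hP, ?_⟩
  intro Q hQ
  exact Finpartition.ext ((aux Q P hQ hP).antisymm (aux P Q hP hQ))

lemma PPon.card_le {ι G : Type*} [AddCommGroup G] [Fintype G] [DecidableEq ι] {s : Finset ι}
    {f : ι → G} (h : PPon s f) : s.card ≤ Fintype.card G * Fintype.card G := by
  classical
  have : ∀ b ∈ (Finset.univ : Finset G), (s.filter (fun a => f a = b)).card ≤ Fintype.card G := by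
    intro b _
    by_contra hcon
    push Not at hcon
    have hd : addOrderOf b < (s.filter (fun a => f a = b)).card :=
      lt_of_le_of_lt addOrderOf_le_card_univ hcon
    obtain ⟨J, hJ, hJc⟩ := Finset.exists_subset_card_eq hd.le
    have hJlt : J ⊂ s.filter (fun a => f a = b) := by
      refine Finset.ssubset_iff_subset_ne.2 ⟨hJ, ?_⟩
      rintro rfl
      omega
    obtain ⟨j, hj, hjJ⟩ := Finset.exists_of_ssubset hJlt
    have hpos : 0 < J.card := by rw [hJc]; exact addOrderOf_pos b
    obtain ⟨i, hi⟩ := Finset.card_pos.1 hpos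
    have hsum : ∀ K : Finset ι, K ⊆ s.filter (fun a => f a = b) →
        ∑ x ∈ K, f x = K.card • b := by
      intro K hK
      rw [← Finset.sum_const]
      exact Finset.sum_congr rfl fun x hx => (Finset.mem_filter.1 (hK hx)).2
    have hsub : insert j (J.erase i) ⊆ s.filter (fun a => f a = b) :=
      Finset.insert_subset hj ((Finset.erase_subset _ _).trans hJ)
    have hfs : s.filter (fun a => f a = b) ⊆ s := Finset.filter_subset _ _
    have h1 : ∑ x ∈ J, f x = 0 := by rw [hsum J hJ, hJc, addOrderOf_nsmul_eq_zero]
    have h2 : ∑ x ∈ insert j (J.erase i), f x = 0 := by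
      rw [hsum _ hsub, Finset.card_insert_of_notMem (by simp [hjJ]), Finset.card_erase_of_mem hi,
        Nat.sub_add_cancel hpos, hJc, addOrderOf_nsmul_eq_zero]
    have h3 := h.2 J (hJ.trans hfs) _ (hsub.trans hfs) h1 h2
    have h4 : J ∩ insert j (J.erase i) = J.erase i := by
      rw [Finset.inter_insert_of_notMem hjJ]
      exact Finset.inter_eq_right.2 (Finset.erase_subset _ _)
    rw [h4] at h3
    have h5 := Finset.sum_erase_add J f hi
    rw [h3, h1, zero_add] at h5
    exact h.1 i (hfs (hJ hi)) h5
  have := Finset.card_le_mul_card_image_of_maps_to (s := s) (t := (Finset.univ : Finset G)) (f := f)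
    (fun _ _ => Finset.mem_univ _) (Fintype.card G) this
  simpa using this

lemma bdd_K1 (G : Type*) [AddCommGroup G] [Finite G] :
    BddAbove {x : ℝ | ∃ (ℓ : ℕ) (g : Fin ℓ → G), IsUFIM g ∧ crossNum g = x} := by
  have := Fintype.ofFinite G
  refine ⟨(Fintype.card G * Fintype.card G : ℕ), ?_⟩
  rintro x ⟨ℓ, g, hg, rfl⟩
  have h1 := (ufim_pp hg).card_le
  have h2 : crossNum g ≤ ∑ i : Fin ℓ, (1 : ℝ) := by
    apply Finset.sum_le_sum
    intro i _
    have : (1 : ℝ) ≤ addOrderOf (g i) := by exact_mod_cast addOrderOf_pos (g i)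
    rw [div_le_one (by linarith)]
    exact this
  refine h2.trans ?_
  simp only [Finset.sum_const, nsmul_eq_mul, mul_one]
  exact_mod_cast h1

lemma PPon.le_K1_of_sum {ι G : Type*} [AddCommGroup G] [Finite G] [DecidableEq ι] {s : Finset ι}
    {f : ι → G} (h : PPon s f) (h0 : ∑ i ∈ s, f i = 0) :
    ∑ i ∈ s, (1 : ℝ) / (addOrderOf (f i) : ℝ) ≤ K1 G := by
  let e : Fin s.card ≃ s := s.equivFin.symm
  let ψ : Fin s.card ↪ ι := e.toEmbedding.trans (Function.Embedding.subtype _)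
  have hmem : ∀ k, ψ k ∈ s := fun k => (e k).2
  have hmap : Finset.univ.map ψ = s := by
    apply Finset.eq_of_subset_of_card_le
    · intro x hx
      obtain ⟨k, _, rfl⟩ := Finset.mem_map.1 hx
      exact hmem k
    · simp
  apply le_csSup (bdd_K1 G)
  refine ⟨s.card, fun k => f (ψ k), ?_, ?_⟩
  · apply pp_ufim
    · refine ⟨fun k _ => h.1 _ (hmem k), ?_⟩
      intro I _ J _ hI hJ
      have hsub : ∀ I : Finset (Fin s.card), I.map ψ ⊆ s := by
        intro I x hx
        obtain ⟨k, _, rfl⟩ := Finset.mem_map.1 hx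
        exact hmem k
      have := h.2 (I.map ψ) (hsub I) (J.map ψ) (hsub J) (by rw [Finset.sum_map]; exact hI)
        (by rw [Finset.sum_map]; exact hJ)
      rw [← Finset.map_inter, Finset.sum_map] at this
      exact this
    · rw [← h0]
      conv_rhs => rw [← hmap]
      rw [Finset.sum_map]
  · unfold crossNum
    conv_rhs => rw [← hmap]
    rw [Finset.sum_map]

lemma PPon.insert_sum {ι G : Type*} [AddCommGroup G] [DecidableEq ι] {s : Finset ι} {x : ι}
    {f : ι → G} (h : PPon s f) (hx0 : f x ≠ 0)
    (h0 : ∑ i ∈ insert x s, f i = 0) : PPon (insert x s) f := by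
  refine ⟨?_, ?_⟩
  · intro i hi
    rcases Finset.mem_insert.1 hi with rfl | hi
    · exact hx0
    · exact h.1 i hi
  have hc : ∀ I ⊆ insert x s, ∑ i ∈ I, f i = 0 → x ∈ I →
      insert x s \ I ⊆ s ∧ ∑ i ∈ insert x s \ I, f i = 0 := by
    intro I hI hI0 hxI
    refine ⟨?_, ?_⟩
    · intro y hy
      simp only [Finset.mem_sdiff, Finset.mem_insert] at hy
      rcases hy.1 with rfl | h'
      · exact absurd hxI hy.2
      · exact h'
    · have := Finset.sum_sdiff (f := f) hI
      rw [hI0, h0, add_zero] at this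
      exact this
  have hn : ∀ I ⊆ insert x s, x ∉ I → I ⊆ s := by
    intro I hI hxI
    exact (Finset.subset_insert_iff_of_notMem hxI).1 hI
  -- mixed case
  have hmix : ∀ I ⊆ insert x s, ∀ J ⊆ insert x s, ∑ i ∈ I, f i = 0 → ∑ i ∈ J, f i = 0 →
      x ∈ I → x ∉ J → ∑ i ∈ I ∩ J, f i = 0 := by
    intro I hI J hJ hI0 hJ0 hxI hxJ
    obtain ⟨h1, h2⟩ := hc I hI hI0 hxI
    have h3 := h.2 J (hn J hJ hxJ) _ h1 hJ0 h2
    have h4 : I ∩ J = J \ (J ∩ (insert x s \ I)) := by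
      ext y
      have := @hJ y
      simp only [Finset.mem_inter, Finset.mem_sdiff] at *
      tauto
    have h5 := Finset.sum_sdiff (f := f) (Finset.inter_subset_left : J ∩ (insert x s \ I) ⊆ J)
    rw [h3, hJ0, add_zero] at h5
    rw [h4]; exact h5
  intro I hI J hJ hI0 hJ0
  by_cases hxI : x ∈ I
  · by_cases hxJ : x ∈ J
    · obtain ⟨h1, h2⟩ := hc J hJ hJ0 hxJ
      have h3 := hmix I hI (insert x s \ J) Finset.sdiff_subset hI0 h2 hxI (by simp [hxJ])
      have h4 : I ∩ J = I \ (I ∩ (insert x s \ J)) := by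
        ext y
        have := @hI y
        simp only [Finset.mem_inter, Finset.mem_sdiff] at *
        tauto
      have h5 := Finset.sum_sdiff (f := f) (Finset.inter_subset_left : I ∩ (insert x s \ J) ⊆ I)
      rw [h3, hI0, add_zero] at h5
      rw [h4]; exact h5
    · exact hmix I hI J hJ hI0 hJ0 hxI hxJ
  · by_cases hxJ : x ∈ J
    · rw [Finset.inter_comm]; exact hmix J hJ I hI hJ0 hI0 hxJ hxI
    · exact h.2 I (hn I hI hxI) J (hn J hJ hxJ) hI0 hJ0

lemma PPon.insert_free {ι G : Type*} [AddCommGroup G] [DecidableEq ι] {s : Finset ι} {x : ι}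
    {f : ι → G} (h : PPon s f) (hfree : ∀ V ⊆ s, ∑ i ∈ V, f i ≠ - f x) :
    PPon (insert x s) f := by
  have hn : ∀ I ⊆ insert x s, ∑ i ∈ I, f i = 0 → I ⊆ s := by
    intro I hI hI0
    by_cases hxI : x ∈ I
    · exfalso
      have h1 := Finset.sum_erase_add I f hxI
      rw [hI0] at h1
      refine hfree (I.erase x) ?_ (eq_neg_of_add_eq_zero_left h1)
      rw [← Finset.subset_insert_iff]; exact hI
    · exact (Finset.subset_insert_iff_of_notMem hxI).1 hI
  refine ⟨?_, ?_⟩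
  · intro i hi
    rcases Finset.mem_insert.1 hi with rfl | hi
    · intro h0
      apply hfree ∅ (Finset.empty_subset _)
      simp [h0]
    · exact h.1 i hi
  · intro I hI J hJ hI0 hJ0
    exact h.2 I (hn I hI hI0) J (hn J hJ hJ0) hI0 hJ0

lemma PPon.lift {ι G : Type*} [AddCommGroup G] [DecidableEq ι] {s : Finset ι}
    {f : ι → G} (h : PPon s f) (d : G) :
    PPon (s.map Function.Embedding.some) (fun o : Option ι => o.elim d f) := by
  refine ⟨?_, ?_⟩
  · intro i hi
    obtain ⟨k, hk, rfl⟩ := Finset.mem_map.1 hi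
    exact h.1 k hk
  · intro I hI J hJ hI0 hJ0
    obtain ⟨I', hI', rfl⟩ := Finset.subset_map_iff.1 hI
    obtain ⟨J', hJ', rfl⟩ := Finset.subset_map_iff.1 hJ
    rw [Finset.sum_map] at hI0 hJ0
    rw [← Finset.map_inter, Finset.sum_map]
    exact h.2 I' hI' J' hJ' hI0 hJ0

lemma PPon.le_K1_add {ι G : Type*} [AddCommGroup G] [Finite G] [DecidableEq ι] {s : Finset ι}
    {f : ι → G} (h : PPon s f) (h0 : ∑ i ∈ s, f i ≠ 0) :
    ∑ i ∈ s, (1 : ℝ) / (addOrderOf (f i) : ℝ) + 1 / (addOrderOf (∑ i ∈ s, f i) : ℝ) ≤ K1 G := by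
  set d := - ∑ i ∈ s, f i with hd
  have hx : (none : Option ι) ∉ s.map Function.Embedding.some := by simp
  have h1 := (h.lift d).insert_sum (x := none) (by simpa [hd] using h0) (by
    rw [Finset.sum_insert hx, Finset.sum_map]
    simp [hd])
  have h2 := h1.le_K1_of_sum (by
    rw [Finset.sum_insert hx, Finset.sum_map]
    simp [hd])
  rw [Finset.sum_insert hx, Finset.sum_map] at h2
  simp only [Option.elim_none, Function.Embedding.some_apply, Option.elim_some, hd,
    addOrderOf_neg] at h2
  linarith

lemma PPon.le_K1 {ι G : Type*} [AddCommGroup G] [Finite G] [DecidableEq ι] {s : Finset ι}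
    {f : ι → G} (h : PPon s f) :
    ∑ i ∈ s, (1 : ℝ) / (addOrderOf (f i) : ℝ) ≤ K1 G := by
  by_cases h0 : ∑ i ∈ s, f i = 0
  · exact h.le_K1_of_sum h0
  · have := h.le_K1_add h0
    have h2 : (0 : ℝ) ≤ 1 / (addOrderOf (∑ i ∈ s, f i) : ℝ) := by positivity
    linarith

/-- If the subset sums miss `-d`, we can add two further elements. -/
lemma PPon.le_K1_two {ι G : Type*} [AddCommGroup G] [Finite G] [DecidableEq ι] {s : Finset ι}
    {f : ι → G} (h : PPon s f) (d : G) (hd : ∀ V ⊆ s, ∑ i ∈ V, f i ≠ - d) :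
    ∑ i ∈ s, (1 : ℝ) / (addOrderOf (f i) : ℝ) + 1 / (addOrderOf d : ℝ)
      + 1 / (addOrderOf (d + ∑ i ∈ s, f i) : ℝ) ≤ K1 G := by
  have hx : (none : Option ι) ∉ s.map Function.Embedding.some := by simp
  have h1 := (h.lift d).insert_free (x := none) (by
    intro V hV
    obtain ⟨V', hV', rfl⟩ := Finset.subset_map_iff.1 hV
    rw [Finset.sum_map]
    exact hd V' hV')
  have h2 := h1.le_K1_add (by
    rw [Finset.sum_insert hx, Finset.sum_map]
    intro h3
    exact hd s subset_rfl (eq_neg_of_add_eq_zero_right h3))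
  rw [Finset.sum_insert hx, Finset.sum_map, Finset.sum_insert hx, Finset.sum_map] at h2
  simp only [Option.elim_none, Function.Embedding.some_apply, Option.elim_some] at h2
  linarith

lemma extract {ι G H : Type*} [AddCommGroup G] [AddCommGroup H] [DecidableEq ι]
    (f : ι → G) (π : G →+ H) (N : Finset ι) :
    ∃ B : Finset (Finset ι), (∀ T ∈ B, T ⊆ N ∧ MZ (fun i => π (f i)) T ∧ ∑ i ∈ T, f i ≠ 0) ∧
      (∀ T ∈ B, ∀ U ∈ B, T ≠ U → Disjoint T U) ∧
      ∀ J ⊆ N \ B.biUnion id, ∑ i ∈ J, π (f i) = 0 → ∑ i ∈ J, f i = 0 := by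
  induction N using Finset.strongInduction with
  | H N ih =>
    by_cases h : ∃ T ⊆ N, MZ (fun i => π (f i)) T ∧ ∑ i ∈ T, f i ≠ 0
    · obtain ⟨T, hT, hmz, hne⟩ := h
      obtain ⟨B, hB1, hB2, hB3⟩ := ih (N \ T) (Finset.sdiff_ssubset hT hmz.1)
      have hdis : ∀ U ∈ B, Disjoint T U := fun U hU =>
        Disjoint.mono_right (hB1 U hU).1 Finset.disjoint_sdiff
      refine ⟨insert T B, ?_, ?_, ?_⟩
      · intro U hU
        rcases Finset.mem_insert.1 hU with rfl | hU
        · exact ⟨hT, hmz, hne⟩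
        · exact ⟨(hB1 U hU).1.trans Finset.sdiff_subset, (hB1 U hU).2⟩
      · intro U hU V hV hUV
        rcases Finset.mem_insert.1 hU with hU1 | hU1 <;>
          rcases Finset.mem_insert.1 hV with hV1 | hV1
        · exact absurd (hU1.trans hV1.symm) hUV
        · rw [hU1]; exact hdis V hV1
        · rw [hV1]; exact (hdis U hU1).symm
        · exact hB2 U hU1 V hV1 hUV
      · intro J hJ
        apply hB3 J
        rw [Finset.biUnion_insert] at hJ
        rw [sdiff_sdiff_left]
        exact hJ
    · push Not at h
      refine ⟨∅, by simp, by simp, ?_⟩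
      intro J hJ hJ0
      obtain ⟨P, hP⟩ := exists_fact (fun i => π (f i)) J hJ0
      rw [← sum_partition P f]
      apply Finset.sum_eq_zero
      intro T hT
      exact h T ((P.le hT).trans (hJ.trans Finset.sdiff_subset)) (hP T hT)

lemma sum_blocks {ι G : Type*} [AddCommMonoid G] [DecidableEq ι] (f : ι → G)
    {B : Finset (Finset ι)} (hdis : ∀ T ∈ B, ∀ U ∈ B, T ≠ U → Disjoint T U)
    {V : Finset (Finset ι)} (hV : V ⊆ B) :
    ∑ i ∈ V.biUnion id, f i = ∑ T ∈ V, ∑ i ∈ T, f i := by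
  rw [Finset.sum_biUnion]
  · rfl
  · intro T hT U hU hTU
    exact hdis T (hV hT) U (hV hU) hTU

lemma biUnion_inter_blocks {ι : Type*} [DecidableEq ι]
    {B : Finset (Finset ι)} (hdis : ∀ T ∈ B, ∀ U ∈ B, T ≠ U → Disjoint T U)
    {V W : Finset (Finset ι)} (hV : V ⊆ B) (hW : W ⊆ B) :
    V.biUnion id ∩ W.biUnion id = (V ∩ W).biUnion id := by
  ext x
  simp only [Finset.mem_inter, Finset.mem_biUnion, id]
  constructor
  · rintro ⟨⟨T, hT, hxT⟩, U, hU, hxU⟩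
    by_cases hTU : T = U
    · subst hTU
      exact ⟨T, ⟨hT, hU⟩, hxT⟩
    · exact absurd hxU (Finset.disjoint_left.1 (hdis T (hV hT) U (hW hU) hTU) hxT)
  · rintro ⟨T, ⟨hT, hU⟩, hxT⟩
    exact ⟨⟨T, hT, hxT⟩, T, hU, hxT⟩

lemma PPon.merge {ι G : Type*} [AddCommGroup G] [DecidableEq ι] {s : Finset ι} {f : ι → G}
    (h : PPon s f) {B : Finset (Finset ι)} (hB : ∀ T ∈ B, T ⊆ s ∧ ∑ i ∈ T, f i ≠ 0)
    (hdis : ∀ T ∈ B, ∀ U ∈ B, T ≠ U → Disjoint T U) :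
    PPon B (fun T => ∑ i ∈ T, f i) := by
  refine ⟨fun T hT => (hB T hT).2, ?_⟩
  intro V hV W hW hV0 hW0
  have hs : ∀ V ⊆ B, V.biUnion id ⊆ s := by
    intro V hV
    exact Finset.biUnion_subset.2 fun T hT => (hB T (hV hT)).1
  rw [← sum_blocks f hdis hV] at hV0
  rw [← sum_blocks f hdis hW] at hW0
  have := h.2 _ (hs V hV) _ (hs W hW) hV0 hW0
  rw [biUnion_inter_blocks hdis hV hW,
    sum_blocks f hdis (Finset.inter_subset_left.trans hV)] at this
  exact this

/-- If on `s` every `π`-zero-sum subfamily is zero-sum then `π ∘ f` is again nice. -/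
lemma PPon.push {ι G H : Type*} [AddCommGroup G] [AddCommGroup H] [DecidableEq ι] {s : Finset ι}
    {f : ι → G} (h : PPon s f) (π : G →+ H)
    (hπ : ∀ J ⊆ s, ∑ i ∈ J, π (f i) = 0 → ∑ i ∈ J, f i = 0) :
    PPon s (fun i => π (f i)) := by
  refine ⟨?_, ?_⟩
  · intro i hi h0
    apply h.1 i hi
    have := hπ {i} (by simpa using hi) (by simpa using h0)
    simpa using this
  · intro I hI J hJ hI0 hJ0
    rw [← map_sum, h.2 I hI J hJ (hπ I hI hI0) (hπ J hJ hJ0), map_zero]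

lemma PPon.mono {ι G : Type*} [AddCommGroup G] [DecidableEq ι] {s t : Finset ι}
    {f : ι → G} (h : PPon s f) (hts : t ⊆ s) : PPon t f :=
  ⟨fun i hi => h.1 i (hts hi), fun I hI J hJ => h.2 I (hI.trans hts) J (hJ.trans hts)⟩

lemma subset_sums {ι H : Type*} [AddCommGroup H] [DecidableEq H] [DecidableEq ι]
    {p : ℕ} (hp : p.Prime) (h : ι → H) (U : Finset ι) :
    (∀ i ∈ U, h i ≠ 0 ∧ p • h i = 0) →
    min p (U.card + 1) ≤ (U.powerset.image (fun V => ∑ i ∈ V, h i)).card := by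
  induction U using Finset.induction_on with
  | empty => intro _; simp
  | insert x U hx ih =>
    intro hU
    have ih' := ih fun i hi => hU i (Finset.mem_insert_of_mem hi)
    set X := U.powerset.image (fun V => ∑ i ∈ V, h i) with hX
    set Y := (insert x U).powerset.image (fun V => ∑ i ∈ V, h i) with hY
    have hXY : X ⊆ Y := Finset.image_subset_image
      (Finset.powerset_mono.2 (Finset.subset_insert x U))
    have hadd : ∀ y ∈ X, h x + y ∈ Y := by
      intro y hy
      obtain ⟨V, hV, rfl⟩ := Finset.mem_image.1 hy
      have hV' := Finset.mem_powerset.1 hV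
      refine Finset.mem_image.2 ⟨insert x V, ?_, ?_⟩
      · exact Finset.mem_powerset.2 (Finset.insert_subset_insert x hV')
      · exact Finset.sum_insert (fun hxV => hx (hV' hxV))
    rw [Finset.card_insert_of_notMem hx]
    by_cases hlt : X.card < Y.card
    · omega
    · have heq : X = Y := Finset.eq_of_subset_of_card_le hXY (not_lt.1 hlt)
      have hmul : ∀ k : ℕ, k • h x ∈ X := by
        intro k
        induction k with
        | zero =>
          refine Finset.mem_image.2 ⟨∅, by simp, by simp⟩
        | succ k ihk =>
          rw [succ_nsmul', heq]
          exact hadd _ ihk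
      have hord : addOrderOf (h x) = p := by
        have := Fact.mk hp
        exact addOrderOf_eq_prime (hU x (Finset.mem_insert_self _ _)).2
          (hU x (Finset.mem_insert_self _ _)).1
      have hcard : p ≤ X.card := by
        have h1 : ((Finset.range p).image (fun k => k • h x)).card = p := by
          rw [Finset.card_image_of_injOn, Finset.card_range]
          intro a ha b hb hab
          simp only [Finset.coe_range, Set.mem_Iio] at ha hb
          exact nsmul_injOn_Iio_addOrderOf (by simpa [hord] using ha) (by simpa [hord] using hb) hab
        calc p = _ := h1.symm
          _ ≤ X.card := Finset.card_le_card (by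
            intro y hy
            obtain ⟨k, _, rfl⟩ := Finset.mem_image.1 hy
            exact hmul k)
      rw [← heq]
      exact (min_le_left _ _).trans hcard

lemma cover {ι H : Type*} [AddCommGroup H] [DecidableEq ι]
    {p : ℕ} (hp : p.Prime) (hH : ∀ X : Finset H, (∀ x ∈ X, p • x = 0) → X.card ≤ p)
    (h : ι → H) (U : Finset ι)
    (hU : ∀ i ∈ U, h i ≠ 0 ∧ p • h i = 0) (hc : p ≤ U.card + 1) (y : H) (hy : p • y = 0) :
    ∃ V ⊆ U, ∑ i ∈ V, h i = y := by
  classical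
  by_contra hcon
  push Not at hcon
  have h1 := subset_sums hp h U hU
  rw [min_eq_left hc] at h1
  have hnot : y ∉ U.powerset.image (fun V => ∑ i ∈ V, h i) := by
    intro hmem
    obtain ⟨V, hV, hVy⟩ := Finset.mem_image.1 hmem
    exact hcon V (Finset.mem_powerset.1 hV) hVy
  have h2 := hH (insert y (U.powerset.image (fun V => ∑ i ∈ V, h i))) (by
    intro x hx
    rcases Finset.mem_insert.1 hx with rfl | hx
    · exact hy
    · obtain ⟨V, hV, rfl⟩ := Finset.mem_image.1 hx
      rw [← Finset.sum_nsmul]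
      exact Finset.sum_eq_zero fun i hi => (hU i (Finset.mem_powerset.1 hV hi)).2)
  rw [Finset.card_insert_of_notMem hnot] at h2
  omega

lemma PPon.card_le_prime {ι H : Type*} [AddCommGroup H] [DecidableEq ι]
    {p : ℕ} (hp : p.Prime) (hH : ∀ X : Finset H, (∀ x ∈ X, p • x = 0) → X.card ≤ p)
    {h : ι → H} {s : Finset ι} (hs : PPon s h) (hk : ∀ i ∈ s, p • h i = 0) : s.card ≤ p := by
  by_contra hcon
  push Not at hcon
  have hp2 := hp.two_le
  obtain ⟨x, hx⟩ := Finset.card_pos.1 (show 0 < s.card by omega)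
  have hsep : ∀ j ∈ s, j ≠ x → ∃ I ⊆ s, x ∈ I ∧ j ∉ I ∧ ∑ i ∈ I, h i = 0 := by
    intro j hj hjx
    have hc : ((s.erase x).erase j).card = s.card - 2 := by
      rw [Finset.card_erase_of_mem (Finset.mem_erase.2 ⟨hjx, hj⟩), Finset.card_erase_of_mem hx]
      omega
    have hsub : (s.erase x).erase j ⊆ s := (Finset.erase_subset _ _).trans (Finset.erase_subset _ _)
    obtain ⟨V, hV, hV0⟩ := cover hp hH h ((s.erase x).erase j)
      (fun i hi => ⟨hs.1 i (hsub hi), hk i (hsub hi)⟩) (by omega) (- h x) (by simp [hk x hx])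
    have hxV : x ∉ V := fun hxV => by simpa using hV hxV
    have hjV : j ∉ V := fun hjV => by simpa using hV hjV
    refine ⟨insert x V, Finset.insert_subset hx (hV.trans hsub), Finset.mem_insert_self _ _, ?_, ?_⟩
    · simp [hjx, hjV]
    · rw [Finset.sum_insert hxV, hV0, add_neg_cancel]
  -- intersect
  have hall : ∀ E : Finset ι, E ⊆ s → x ∉ E → ∃ I ⊆ s, x ∈ I ∧ (E.Nonempty → Disjoint I E ∧ ∑ i ∈ I, h i = 0) := by
    intro E
    induction E using Finset.induction_on with
    | empty => intro _ _; exact ⟨s, subset_rfl, hx, by simp⟩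
    | insert j E hj ih =>
      intro hE hxE
      have hjs := hE (Finset.mem_insert_self _ _)
      have hjx : j ≠ x := fun h => hxE (by simp [h])
      obtain ⟨I, hI, hxI, hI'⟩ := ih ((Finset.subset_insert _ _).trans hE)
        (fun h => hxE (Finset.mem_insert_of_mem h))
      obtain ⟨K, hK, hxK, hjK, hK0⟩ := hsep j hjs hjx
      rcases E.eq_empty_or_nonempty with rfl | hne
      · exact ⟨K, hK, hxK, fun _ => ⟨by simpa using hjK, hK0⟩⟩
      · obtain ⟨hd, h0⟩ := hI' hne
        refine ⟨I ∩ K, Finset.inter_subset_left.trans hI, Finset.mem_inter.2 ⟨hxI, hxK⟩,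
          fun _ => ⟨?_, hs.2 I hI K hK h0 hK0⟩⟩
        rw [Finset.disjoint_insert_right]
        exact ⟨fun h => hjK (Finset.mem_inter.1 h).2, hd.mono_left Finset.inter_subset_left⟩
  obtain ⟨I, hI, hxI, hI'⟩ := hall (s.erase x) (Finset.erase_subset _ _) (by simp)
  obtain ⟨hd, h0⟩ := hI' (by
    rw [← Finset.card_pos, Finset.card_erase_of_mem hx]; omega)
  have : I = {x} := by
    apply Finset.eq_singleton_iff_unique_mem.2 ⟨hxI, ?_⟩
    intro y hy
    by_contra hyx
    exact Finset.disjoint_left.1 hd hy (Finset.mem_erase.2 ⟨hyx, hI hy⟩)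
  rw [this, Finset.sum_singleton] at h0
  exact hs.1 x hx h0

lemma MZ.ne_zero {ι H : Type*} [AddCommGroup H] {h : ι → H} {T : Finset ι}
    (hT : MZ h T) (hc : T.card ≠ 1) : ∀ i ∈ T, h i ≠ 0 := by
  intro i hi h0
  have := hT.eq_of_subset (J := {i}) (by simpa using hi) (by simp) (by simpa using h0)
  rw [← this] at hc
  simp at hc

lemma MZ.card_le_prime {ι H : Type*} [AddCommGroup H] [DecidableEq ι]
    {p : ℕ} (hp : p.Prime) (hH : ∀ X : Finset H, (∀ x ∈ X, p • x = 0) → X.card ≤ p)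
    {h : ι → H} {T : Finset ι} (hT : MZ h T) (hk : ∀ i ∈ T, p • h i = 0) : T.card ≤ p := by
  by_contra hcon
  push Not at hcon
  have hp2 := hp.two_le
  have hnz := hT.ne_zero (by omega)
  obtain ⟨x, hx, j, hj, hxj⟩ := Finset.one_lt_card.1 (show 1 < T.card by omega)
  have hc : ((T.erase x).erase j).card = T.card - 2 := by
    rw [Finset.card_erase_of_mem (Finset.mem_erase.2 ⟨hxj.symm, hj⟩), Finset.card_erase_of_mem hx]
    omega
  have hsub : (T.erase x).erase j ⊆ T := (Finset.erase_subset _ _).trans (Finset.erase_subset _ _)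
  obtain ⟨V, hV, hV0⟩ := cover hp hH h ((T.erase x).erase j)
    (fun i hi => ⟨hnz i (hsub hi), hk i (hsub hi)⟩) (by omega) (- h x) (by simp [hk x hx])
  have hxV : x ∉ V := fun hxV => by simpa using hV hxV
  have hjV : j ∉ V := fun hjV => by simpa using hV hjV
  have := hT.eq_of_subset (J := insert x V) (Finset.insert_subset hx (hV.trans hsub)) (by simp)
    (by rw [Finset.sum_insert hxV, hV0, add_neg_cancel])
  rw [← this] at hj
  simp [hjV, hxj.symm] at hj

lemma block_bound {ι G : Type*} [AddCommGroup G] [Finite G] [DecidableEq ι]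
    {p : ℕ} (hp : p.Prime) (hG : ∀ X : Finset G, (∀ x ∈ X, p • x = 0) → X.card ≤ p)
    (m : ℕ) (f : ι → G) (T : Finset ι) (hT : MZ (fun i => p ^ m • f i) T)
    (hk : ∀ i ∈ T, p ^ (m + 1) • f i = 0) :
    ∑ i ∈ T, (1 : ℝ) / (addOrderOf (f i) : ℝ) ≤ 1 / (addOrderOf (∑ i ∈ T, f i) : ℝ) := by
  by_cases hc : T.card = 1
  · obtain ⟨i, rfl⟩ := Finset.card_eq_one.1 hc
    simp
  · have hnz := hT.ne_zero hc
    have hcp : T.card ≤ p := hT.card_le_prime hp hG (by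
      intro i hi
      rw [← mul_nsmul', ← pow_succ']
      exact hk i hi)
    have hord : ∀ i ∈ T, addOrderOf (f i) = p ^ (m + 1) := by
      intro i hi
      have := Fact.mk hp
      exact addOrderOf_eq_prime_pow (hnz i hi) (hk i hi)
    have hp0 : (0 : ℝ) < p := by exact_mod_cast hp.pos
    calc ∑ i ∈ T, (1 : ℝ) / (addOrderOf (f i) : ℝ) = ∑ i ∈ T, (1 : ℝ) / (p : ℝ) ^ (m + 1) := by
          apply Finset.sum_congr rfl
          intro i hi
          rw [hord i hi]; push_cast; rfl
      _ = T.card * (1 / (p : ℝ) ^ (m + 1)) := by simp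
      _ ≤ p * (1 / (p : ℝ) ^ (m + 1)) := by
          apply mul_le_mul_of_nonneg_right _ (by positivity)
          exact_mod_cast hcp
      _ = 1 / (p : ℝ) ^ m := by rw [pow_succ']; field_simp
      _ ≤ _ := by
          apply one_div_le_one_div_of_le
          · exact_mod_cast addOrderOf_pos _
          · have : addOrderOf (∑ i ∈ T, f i) ≤ p ^ m := by
              apply Nat.le_of_dvd (pow_pos hp.pos m)
              apply addOrderOf_dvd_of_nsmul_eq_zero
              rw [← Finset.sum_nsmul]
              exact hT.2.1
            exact_mod_cast this

lemma cross_MZ {G : Type} [AddCommGroup G] [Finite G]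
    {p : ℕ} (hp : p.Prime) (hG : ∀ X : Finset G, (∀ x ∈ X, p • x = 0) → X.card ≤ p)
    (m : ℕ) : ∀ {ι : Type} [DecidableEq ι] (f : ι → G) (T : Finset ι), MZ f T →
      (∀ i ∈ T, p ^ m • f i = 0) → ∑ i ∈ T, (1 : ℝ) / (addOrderOf (f i) : ℝ) ≤ 1 := by
  induction m with
  | zero =>
    intro ι _ f T hT hk
    have hc : T.card = 1 := by
      by_contra hc
      obtain ⟨i, hi⟩ := hT.1
      exact hT.ne_zero hc i hi (by simpa using hk i hi)
    obtain ⟨i, rfl⟩ := Finset.card_eq_one.1 hc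
    have := hk i (by simp)
    simp at this
    simp [this]
  | succ m ih =>
    intro ι _ f T hT hk
    obtain ⟨P, hP⟩ := exists_fact (fun i => p ^ m • f i) T (by
      rw [Finset.sum_nsmul, hT.2.1, smul_zero])
    have h1 : ∑ i ∈ T, (1 : ℝ) / (addOrderOf (f i) : ℝ) ≤
        ∑ U ∈ P.parts, 1 / (addOrderOf (∑ i ∈ U, f i) : ℝ) := by
      rw [← sum_partition P]
      apply Finset.sum_le_sum
      intro U hU
      exact block_bound hp hG m f U (hP U hU) fun i hi => hk i (P.le hU hi)
    refine h1.trans (ih (fun U : Finset ι => ∑ i ∈ U, f i) P.parts ?_ ?_)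
    · have hdis : ∀ T ∈ P.parts, ∀ U ∈ P.parts, T ≠ U → Disjoint T U :=
        fun T hT U hU h => P.disjoint hT hU h
      refine ⟨?_, ?_, ?_⟩
      · exact P.parts_nonempty hT.1.ne_empty
      · rw [_root_.sum_partition]; exact hT.2.1
      · intro V hV hVne hV0
        rw [← sum_blocks f hdis hV.1] at hV0
        have hsub : V.biUnion id ⊆ T := Finset.biUnion_subset.2 fun U hU => P.le (hV.1 hU)
        have hne : (V.biUnion id).Nonempty := by
          obtain ⟨U, hU⟩ := hVne
          obtain ⟨x, hx⟩ := (hP U (hV.1 hU)).1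
          exact ⟨x, Finset.mem_biUnion.2 ⟨U, hU, hx⟩⟩
        have heq := hT.eq_of_subset hsub hne hV0
        apply hV.2
        intro U hU
        obtain ⟨x, hx⟩ := (hP U hU).1
        have hxT : x ∈ V.biUnion id := by rw [heq]; exact P.le hU hx
        obtain ⟨W, hW, hxW⟩ := Finset.mem_biUnion.1 hxT
        by_cases hUW : U = W
        · rw [hUW]; exact hW
        · exact absurd hxW (Finset.disjoint_left.1 (hdis U hU W (hV.1 hW) hUW) hx)
    · intro U hU
      have := (hP U hU).2.1
      rwa [Finset.sum_nsmul] at this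

lemma cross_PP {G : Type} [AddCommGroup G] [Finite G]
    {p : ℕ} (hp : p.Prime) (hG : ∀ X : Finset G, (∀ x ∈ X, p • x = 0) → X.card ≤ p)
    (m : ℕ) : ∀ {ι : Type} [DecidableEq ι] (f : ι → G) (s : Finset ι), PPon s f →
      (∀ i ∈ s, p ^ m • f i = 0) →
      ∑ i ∈ s, (1 : ℝ) / (addOrderOf (f i) : ℝ) ≤ ∑ k ∈ Finset.range m, 1 / (p : ℝ) ^ k := by
  induction m with
  | zero =>
    intro ι _ f s hs hk
    have : s = ∅ := by
      apply Finset.eq_empty_of_forall_notMem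
      intro i hi
      exact hs.1 i hi (by simpa using hk i hi)
    simp [this]
  | succ m ih =>
    intro ι _ f s hs hk
    let π : G →+ G := nsmulAddMonoidHom (p ^ m)
    have hπ : ∀ x, π x = p ^ m • x := fun _ => rfl
    obtain ⟨B, hB, hdis, hR⟩ := extract f π s
    set R := s \ B.biUnion id with hRdef
    have hBs : B.biUnion id ⊆ s := Finset.biUnion_subset.2 fun T hT => (hB T hT).1
    have hRs : R ⊆ s := Finset.sdiff_subset
    have hpush := (hs.mono hRs).push π hR
    have hRc : R.card ≤ p := hpush.card_le_prime hp hG (by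
      intro i hi
      rw [hπ, ← mul_nsmul', ← pow_succ']
      exact hk i (hRs hi))
    have hp0 : (0 : ℝ) < p := by exact_mod_cast hp.pos
    have h1 : ∑ i ∈ R, (1 : ℝ) / (addOrderOf (f i) : ℝ) ≤ 1 / (p : ℝ) ^ m := by
      calc ∑ i ∈ R, (1 : ℝ) / (addOrderOf (f i) : ℝ) = ∑ i ∈ R, (1 : ℝ) / (p : ℝ) ^ (m + 1) := by
            apply Finset.sum_congr rfl
            intro i hi
            have := Fact.mk hp
            rw [addOrderOf_eq_prime_pow (hpush.1 i hi) (hk i (hRs hi))]; push_cast; rfl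
        _ = R.card * (1 / (p : ℝ) ^ (m + 1)) := by simp
        _ ≤ p * (1 / (p : ℝ) ^ (m + 1)) := by
            apply mul_le_mul_of_nonneg_right _ (by positivity)
            exact_mod_cast hRc
        _ = 1 / (p : ℝ) ^ m := by rw [pow_succ']; field_simp
    have h2 : ∑ i ∈ B.biUnion id, (1 : ℝ) / (addOrderOf (f i) : ℝ) ≤
        ∑ k ∈ Finset.range m, 1 / (p : ℝ) ^ k := by
      rw [sum_blocks _ hdis subset_rfl]
      refine le_trans (Finset.sum_le_sum fun T hT =>
        block_bound hp hG m f T (hB T hT).2.1 fun i hi => hk i ((hB T hT).1 hi)) ?_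
      refine ih (fun T : Finset ι => ∑ i ∈ T, f i) B
        (hs.merge (fun T hT => ⟨(hB T hT).1, (hB T hT).2.2⟩) hdis) ?_
      intro T hT
      have := (hB T hT).2.1.2.1
      simp only [hπ] at this
      rwa [Finset.sum_nsmul] at this
    rw [Finset.sum_range_succ, ← Finset.sum_sdiff hBs]
    linarith

lemma geom_le_two {p : ℕ} (hp : p.Prime) (m : ℕ) :
    ∑ k ∈ Finset.range m, 1 / (p : ℝ) ^ k ≤ 2 := by
  have h1 : ∀ m : ℕ, ∑ k ∈ Finset.range m, 1 / (2 : ℝ) ^ k = 2 - 2 * (1 / 2 ^ m) := by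
    intro m
    induction m with
    | zero => simp
    | succ m ih => rw [Finset.sum_range_succ, ih]; field_simp; ring
  have h2 : ∑ k ∈ Finset.range m, 1 / (p : ℝ) ^ k ≤ ∑ k ∈ Finset.range m, 1 / (2 : ℝ) ^ k := by
    apply Finset.sum_le_sum
    intro k _
    apply one_div_le_one_div_of_le (by positivity)
    apply pow_le_pow_left₀ (by norm_num)
    exact_mod_cast hp.two_le
  rw [h1] at h2
  have : (0 : ℝ) ≤ 2 * (1 / 2 ^ m) := by positivity
  linarith

/-- Theorem (mainthm (2)): `K₁(C_{p^m} ⊕ C_q^n) ≤ K₁(C_{p^m}) + K₁(C_q^n)` for distinct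
primes `p, q`. -/
theorem K1_pm_qn_le (p q : ℕ) (hp : p.Prime) (hq : q.Prime) (hpq : p ≠ q)
    (m n : ℕ) (hm : 1 ≤ m) (hn : 1 ≤ n) :
    K1 (ZMod (p ^ m) × (Fin n → ZMod q)) ≤
      K1 (ZMod (p ^ m)) + K1 (Fin n → ZMod q) := by
  have hp0 : p ^ m ≠ 0 := pow_ne_zero _ hp.ne_zero
  haveI : NeZero (p ^ m) := ⟨hp0⟩
  haveI : NeZero q := ⟨hq.ne_zero⟩
  have hA : ∀ X : Finset (ZMod (p ^ m)), (∀ x ∈ X, p • x = 0) → X.card ≤ p := by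
    intro X hX
    refine le_trans (Finset.card_le_card ?_)
      (IsAddCyclic.card_nsmul_eq_zero_le (α := ZMod (p ^ m)) hp.pos)
    intro x hx
    simpa using hX x hx
  have hAk : ∀ a : ZMod (p ^ m), p ^ m • a = 0 := by
    intro a
    rw [nsmul_eq_mul, ZMod.natCast_self, zero_mul]
  have hBk : ∀ b : Fin n → ZMod q, q • b = 0 := by
    intro b
    rw [nsmul_eq_mul]
    funext i
    simp
  have hBord : ∀ b : Fin n → ZMod q, b ≠ 0 → addOrderOf b = q := by
    intro b hb
    have := Fact.mk hq
    exact addOrderOf_eq_prime (hBk b) hb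
  have hq0 : (0 : ℝ) < q := by exact_mod_cast hq.pos
  have hord : ∀ x : ZMod (p ^ m) × (Fin n → ZMod q), x.2 ≠ 0 →
      (1 : ℝ) / (addOrderOf x : ℝ) = (1 / q) * (1 / (addOrderOf x.1 : ℝ)) := by
    intro x hx
    have hcop : Nat.Coprime (addOrderOf x.1) q := by
      have h1 : addOrderOf x.1 ∣ p ^ m := addOrderOf_dvd_of_nsmul_eq_zero (hAk x.1)
      exact Nat.Coprime.coprime_dvd_left h1
        (Nat.Coprime.pow_left m ((Nat.coprime_primes hp hq).2 hpq))
    rw [Prod.addOrderOf, hBord _ hx, hcop.lcm_eq_mul]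
    push_cast
    field_simp
  have hord1 : ∀ x : ZMod (p ^ m) × (Fin n → ZMod q),
      (1 : ℝ) / (addOrderOf x : ℝ) ≤ 1 / (addOrderOf x.1 : ℝ) := by
    intro x
    apply one_div_le_one_div_of_le
    · exact_mod_cast addOrderOf_pos _
    · have : addOrderOf x.1 ≤ addOrderOf x :=
        Nat.le_of_dvd (addOrderOf_pos x)
          (addOrderOf_map_dvd (AddMonoidHom.fst (ZMod (p ^ m)) (Fin n → ZMod q)) x)
      exact_mod_cast this
  have hnonneg : 0 ≤ K1 (ZMod (p ^ m)) + K1 (Fin n → ZMod q) := by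
    have h1 : PPon (∅ : Finset ℕ) (fun _ => (0 : ZMod (p ^ m))) :=
      ⟨by simp, by intro I hI J hJ _ _; simp [Finset.subset_empty.1 hI]⟩
    have h2 : PPon (∅ : Finset ℕ) (fun _ => (0 : Fin n → ZMod q)) :=
      ⟨by simp, by intro I hI J hJ _ _; simp [Finset.subset_empty.1 hI]⟩
    have h3 := h1.le_K1
    have h4 := h2.le_K1
    simp only [Finset.sum_empty] at h3 h4
    linarith
  apply Real.sSup_le _ hnonneg
  rintro x ⟨ℓ, g, hg, rfl⟩
  have hpp := ufim_pp hg
  let π := AddMonoidHom.fst (ZMod (p ^ m)) (Fin n → ZMod q)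
  have hπ : ∀ x, π x = x.1 := fun _ => rfl
  let N : Finset (Fin ℓ) := Finset.univ.filter (fun i => (g i).2 ≠ 0)
  let SA : Finset (Fin ℓ) := Finset.univ.filter (fun i => (g i).2 = 0)
  obtain ⟨B, hB, hdis, hR⟩ := extract g π N
  set R := N \ B.biUnion id with hRdef
  have hBN : B.biUnion id ⊆ N := Finset.biUnion_subset.2 fun T hT => (hB T hT).1
  have hRN : R ⊆ N := Finset.sdiff_subset
  have hN : ∀ i ∈ N, (g i).2 ≠ 0 := fun i hi => (Finset.mem_filter.1 hi).2
  have hSA : ∀ i ∈ SA, (g i).2 = 0 := fun i hi => (Finset.mem_filter.1 hi).2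
  have hSAN : Disjoint SA N := by
    rw [Finset.disjoint_left]
    intro i h1 h2
    exact hN i h2 (hSA i h1)
  -- decomposition of the cross number
  have hdecomp : crossNum g = ∑ i ∈ SA, (1 : ℝ) / (addOrderOf (g i) : ℝ)
      + ∑ i ∈ R, (1 : ℝ) / (addOrderOf (g i) : ℝ)
      + ∑ T ∈ B, ∑ i ∈ T, (1 : ℝ) / (addOrderOf (g i) : ℝ) := by
    rw [← sum_blocks _ hdis subset_rfl, add_assoc, Finset.sum_sdiff hBN]
    unfold crossNum
    rw [← Finset.sum_filter_add_sum_filter_not Finset.univ (fun i => (g i).2 = 0)]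
  -- the blocks
  have hT1 : ∀ T ∈ B, (∑ i ∈ T, g i).1 = 0 := by
    intro T hT
    have := (hB T hT).2.1.2.1
    rw [← map_sum] at this
    exact this
  have hblock : ∀ T ∈ B, ∑ i ∈ T, (1 : ℝ) / (addOrderOf (g i) : ℝ) ≤ 1 / q := by
    intro T hT
    have h1 := cross_MZ hp hA m (fun i => π (g i)) T (hB T hT).2.1 (fun i _ => hAk _)
    calc ∑ i ∈ T, (1 : ℝ) / (addOrderOf (g i) : ℝ)
        = ∑ i ∈ T, (1 / (q : ℝ)) * (1 / (addOrderOf (g i).1 : ℝ)) :=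
          Finset.sum_congr rfl fun i hi => hord _ (hN i ((hB T hT).1 hi))
      _ = (1 / (q : ℝ)) * ∑ i ∈ T, (1 / (addOrderOf (π (g i)) : ℝ)) := by
          rw [Finset.mul_sum]; rfl
      _ ≤ (1 / (q : ℝ)) * 1 := by
          apply mul_le_mul_of_nonneg_left h1 (by positivity)
      _ = 1 / q := mul_one _
  have hmerge := hpp.merge (B := B) (fun T hT => ⟨Finset.subset_univ _, (hB T hT).2.2⟩) hdis
  let ρ := AddMonoidHom.snd (ZMod (p ^ m)) (Fin n → ZMod q)
  have hBpp : PPon B (fun T => ρ (∑ i ∈ T, g i)) := by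
    apply hmerge.push ρ
    intro V hV hV0
    apply Prod.ext
    · rw [Prod.fst_sum]
      exact Finset.sum_eq_zero fun T hT => hT1 T (hV hT)
    · rw [Prod.snd_sum]
      exact hV0
  have hBsum : ∑ T ∈ B, ∑ i ∈ T, (1 : ℝ) / (addOrderOf (g i) : ℝ) ≤
      ∑ T ∈ B, (1 : ℝ) / (addOrderOf (ρ (∑ i ∈ T, g i)) : ℝ) := by
    apply Finset.sum_le_sum
    intro T hT
    rw [hBord _ (hBpp.1 T hT)]
    exact hblock T hT
  by_cases hcase : ∀ b : Fin n → ZMod q, ∃ V ⊆ B, ∑ T ∈ V, ρ (∑ i ∈ T, g i) = b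
  · -- everything left over goes to the first component
    have hrest : PPon (SA ∪ R) (fun i => π (g i)) := by
      have hdisR : ∀ I ⊆ SA ∪ R, ∀ V ⊆ B, Disjoint I (V.biUnion id) := by
        intro I hI V hV
        rw [Finset.disjoint_left]
        intro i hi hiV
        have hiB : i ∈ B.biUnion id := Finset.biUnion_subset_biUnion_of_subset_left _ hV hiV
        rcases Finset.mem_union.1 (hI hi) with h1 | h1
        · exact Finset.disjoint_left.1 hSAN h1 (hBN hiB)
        · exact (Finset.mem_sdiff.1 h1).2 hiB
      have hlift : ∀ I ⊆ SA ∪ R, ∑ i ∈ I, π (g i) = 0 → ∃ V ⊆ B,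
          ∑ i ∈ I ∪ V.biUnion id, g i = 0 := by
        intro I hI hI0
        obtain ⟨V, hV, hVs⟩ := hcase (- ρ (∑ i ∈ I, g i))
        refine ⟨V, hV, ?_⟩
        rw [Finset.sum_union (hdisR I hI V hV), sum_blocks g hdis hV]
        apply Prod.ext
        · rw [Prod.fst_add, Prod.fst_sum (s := V), Finset.sum_eq_zero fun T hT => hT1 T (hV hT),
            add_zero, Prod.fst_sum]
          exact hI0
        · rw [← map_sum] at hVs
          change ρ (_ + _) = 0
          rw [map_add, hVs, add_neg_cancel]
      refine ⟨?_, ?_⟩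
      · intro i hi h0
        rcases Finset.mem_union.1 hi with h1 | h1
        · exact hpp.1 i (Finset.mem_univ i) (Prod.ext h0 (hSA i h1))
        · have := hR {i} (by simpa using h1) (by simpa using h0)
          exact hpp.1 i (Finset.mem_univ i) (by simpa using this)
      · intro I hI J hJ hI0 hJ0
        obtain ⟨V, hV, hV0⟩ := hlift I hI hI0
        obtain ⟨W, hW, hW0⟩ := hlift J hJ hJ0
        have h1 := hpp.2 _ (Finset.subset_univ _) _ (Finset.subset_univ _) hV0 hW0
        have h2 : (I ∪ V.biUnion id) ∩ (J ∪ W.biUnion id) = (I ∩ J) ∪ (V ∩ W).biUnion id := by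
          rw [← biUnion_inter_blocks hdis hV hW]
          have d1 := Finset.disjoint_left.1 (hdisR I hI W hW)
          have d2 := Finset.disjoint_left.1 (hdisR J hJ V hV)
          ext i
          have e1 := @d1 i
          have e2 := @d2 i
          simp only [Finset.mem_inter, Finset.mem_union]
          tauto
        have hVW : V ∩ W ⊆ B := Finset.inter_subset_left.trans hV
        have hIJ : I ∩ J ⊆ SA ∪ R := Finset.inter_subset_left.trans hI
        rw [h2, Finset.sum_union (hdisR _ hIJ _ hVW), sum_blocks g hdis hVW] at h1
        have h3 := congrArg Prod.fst h1
        rw [Prod.fst_add, Prod.fst_sum (s := V ∩ W),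
          Finset.sum_eq_zero fun T hT => hT1 T (hVW hT), add_zero, Prod.fst_sum] at h3
        exact h3
    have h1 := hrest.le_K1
    have h2 := hBpp.le_K1
    rw [Finset.sum_union (hSAN.mono_right hRN)] at h1
    have h3 : ∑ i ∈ SA, (1 : ℝ) / (addOrderOf (g i) : ℝ) ≤
        ∑ i ∈ SA, (1 : ℝ) / (addOrderOf (π (g i)) : ℝ) :=
      Finset.sum_le_sum fun i _ => hord1 _
    have h4 : ∑ i ∈ R, (1 : ℝ) / (addOrderOf (g i) : ℝ) ≤
        ∑ i ∈ R, (1 : ℝ) / (addOrderOf (π (g i)) : ℝ) :=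
      Finset.sum_le_sum fun i _ => hord1 _
    rw [hdecomp]
    linarith
  · -- the second component can be extended by two elements
    push Not at hcase
    obtain ⟨b, hb⟩ := hcase
    have hb0 : - b ≠ 0 := by
      intro h0
      apply hb ∅ (Finset.empty_subset _)
      rw [Finset.sum_empty]
      exact (neg_eq_zero.1 h0).symm
    have hb1 : - b + ∑ T ∈ B, ρ (∑ i ∈ T, g i) ≠ 0 := by
      intro h0
      exact hb B subset_rfl (neg_add_eq_zero.1 h0).symm
    have h1 := hBpp.le_K1_two (- b) (by rw [neg_neg]; exact hb)
    rw [hBord _ hb0, hBord _ hb1] at h1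
    have hSApp : PPon SA (fun i => π (g i)) := by
      apply (hpp.mono (Finset.subset_univ SA)).push π
      intro J hJ hJ0
      apply Prod.ext
      · rw [Prod.fst_sum]; exact hJ0
      · rw [Prod.snd_sum]; exact Finset.sum_eq_zero fun i hi => hSA i (hJ hi)
    have h2 := hSApp.le_K1
    have h3 : ∑ i ∈ SA, (1 : ℝ) / (addOrderOf (g i) : ℝ) ≤
        ∑ i ∈ SA, (1 : ℝ) / (addOrderOf (π (g i)) : ℝ) :=
      Finset.sum_le_sum fun i _ => hord1 _
    have hRpp : PPon R (fun i => π (g i)) := (hpp.mono (Finset.subset_univ R)).push π hR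
    have h4 := (cross_PP hp hA m _ R hRpp (fun i _ => hAk _)).trans (geom_le_two hp m)
    have h5 : ∑ i ∈ R, (1 : ℝ) / (addOrderOf (g i) : ℝ) ≤ 1 / q + 1 / q := by
      calc ∑ i ∈ R, (1 : ℝ) / (addOrderOf (g i) : ℝ)
          = ∑ i ∈ R, (1 / (q : ℝ)) * (1 / (addOrderOf (g i).1 : ℝ)) :=
            Finset.sum_congr rfl fun i hi => hord _ (hN i (hRN hi))
        _ = (1 / (q : ℝ)) * ∑ i ∈ R, (1 / (addOrderOf (π (g i)) : ℝ)) := by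
            rw [Finset.mul_sum]; rfl
        _ ≤ (1 / (q : ℝ)) * 2 := by
            apply mul_le_mul_of_nonneg_left h4 (by positivity)
        _ = 1 / q + 1 / q := by ring
    rw [hdecomp]
    linarith
end
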